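/- arXiv:2203.03393 — 5 statements merged into one kernel-verified Lean document; each statement's English description precedes it below -/
import Mathlib

section
/- Let ρ be a metric on ℝⁿ (n ≥ 1) whose induced topology coincides with the Euclidean topology of ℝⁿ. Then the n-dimensional Hausdorff measure of ℝⁿ computed with respect to ρ is strictly positive: ℋⁿ_ρ(ℝⁿ) > 0. -/
open MeasureTheory

/-- The `d`-dimensional Hausdorff outer measure on `X` computed with respect to an
explicitly given metric `ρ` on `X` (no normalizing constant). -/
noncomputable def hausdorffOuterMeasure {X : Type*} (ρ : MetricSpace X) (d : ℝ) :
    MeasureTheory.OuterMeasure X :=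
  @MeasureTheory.OuterMeasure.mkMetric X (@MetricSpace.toEMetricSpace X ρ) fun r => r ^ d

/-!
Let `Q` be a cube in `ℝⁿ`. A face and the opposite one are disjoint compact sets, hence at positive
`ρ`-distance. So the map `g` whose `i`-th coordinate is the `ρ`-distance to the `i`-th lower face,
which is 1-Lipschitz for the sup norm, vanishes in its `i`-th coordinate on that face and is at
least some `dᵢ > 0` in it on the opposite one. By the Poincaré–Miranda theorem `g '' Q` contains the
box `∏ᵢ [0, dᵢ]`. Thus `0 < ∏ᵢ dᵢ ≤ ℋⁿ (g '' Q) ≤ ℋⁿ_ρ Q`.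

Poincaré–Miranda is equivalent to Brouwer's fixed point theorem, for which we use the volume
argument of Milnor and Rogers. Let `h` be Lipschitz and zero off a bounded open set `U`, and
differentiable on `U`. For small `t` the map `id + t • h` is a bijection of `U` with positive
Jacobian, so that `∫_U det (1 + t • Dh) = vol U`. The left side is a polynomial in `t`, so the
equality holds at `t = 1` too. But if `id + h` took all its values on `U` in a sphere, its Jacobian
would vanish there.
-/

open Set Metric Function Filter Topology
open scoped NNReal

section PolynomialInterpolation

open Polynomial in
theorem exists_natDegree_le_and_eval_eq_det_one_add_smul {R M : Type*} [CommRing R]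
    [AddCommGroup M] [Module R M] [Module.Free R M] [Module.Finite R M] [Nontrivial R]
    (A : M →ₗ[R] M) :
    ∃ p : R[X], p.natDegree ≤ Module.finrank R M ∧
      ∀ t : R, p.eval t = LinearMap.det (1 + t • A) := by
  let b := Module.finBasis R M
  let B := LinearMap.toMatrix b b A
  refine ⟨((X : R[X]) • B.map C + (1 : Matrix _ _ R).map C).det, ?_, fun t => ?_⟩
  · simpa using natDegree_det_X_add_C_le B 1
  · have hB : LinearMap.toMatrix b b (1 + t • A) = 1 + t • B := by
      rw [map_add, LinearMap.toMatrix_one, map_smul]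
    rw [← LinearMap.det_toMatrix b, hB, ← coe_evalRingHom, RingHom.map_det]
    congr 1
    ext i j
    simp only [coe_evalRingHom, RingHom.mapMatrix_apply, Matrix.map_apply, Matrix.add_apply,
      Matrix.smul_apply, smul_eq_mul, eval_add, eval_mul, eval_X, eval_C]
    ring

theorem exists_det_one_add_eq_sum_mul_det_one_add_smul {𝕜 V : Type*} [Field 𝕜] [AddCommGroup V]
    [Module 𝕜 V] [FiniteDimensional 𝕜 V] {t : ℕ → 𝕜} (ht : Injective t) :
    ∃ c : ℕ → 𝕜, ∀ A : V →ₗ[𝕜] V, LinearMap.det (1 + A) =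
      ∑ i ∈ Finset.range (Module.finrank 𝕜 V + 1), c i * LinearMap.det (1 + t i • A) := by
  set s := Finset.range (Module.finrank 𝕜 V + 1)
  refine ⟨fun i => (Lagrange.basis s t i).eval 1, fun A => ?_⟩
  obtain ⟨p, hdeg, heval⟩ := exists_natDegree_le_and_eval_eq_det_one_add_smul A
  have hdeg' : p.degree < s.card := Polynomial.degree_le_natDegree.trans_lt <| by
    rw [Finset.card_range]
    exact_mod_cast Nat.lt_succ_of_le hdeg
  have hp := congrArg (Polynomial.eval 1) (Lagrange.eq_interpolate ht.injOn hdeg')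
  rw [heval, one_smul, Lagrange.interpolate_apply] at hp
  simpa [Polynomial.eval_finsetSum, heval, mul_comm] using hp

end PolynomialInterpolation

section Jacobian

variable {E : Type*} [NormedAddCommGroup E] [NormedSpace ℝ E] {K : ℝ≥0} {h : E → E} {U : Set E}

theorem hasFDerivWithinAt_id_add (hU : IsOpen U) (hd : DifferentiableOn ℝ h U) {x : E}
    (hx : x ∈ U) : HasFDerivWithinAt (fun x => x + h x) (1 + fderiv ℝ h x) U x :=
  ((hasFDerivAt_id x).add (hd.hasFDerivAt (hU.mem_nhds hx))).hasFDerivWithinAt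

section CompleteSpace

variable [CompleteSpace E]

theorem det_one_add_ne_zero_of_norm_lt_one {A : E →L[ℝ] E} (hA : ‖A‖ < 1) :
    (1 + A).det ≠ 0 := by
  have hunit : IsUnit (1 + A) := by
    simpa using isUnit_one_sub_of_norm_lt_one (x := -A) (by simpa)
  exact ((hunit.map ContinuousLinearMap.toLinearMapRingHom).map LinearMap.det).ne_zero

theorem det_one_add_pos_of_norm_lt_one {A : E →L[ℝ] E} (hA : ‖A‖ < 1) :
    0 < (1 + A).det := by
  have hcont : Continuous fun s : ℝ => (1 + s • A).det :=
    ContinuousLinearMap.continuous_det.comp (by fun_prop)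
  have hne : ∀ s ∈ Icc (0 : ℝ) 1, (1 + s • A).det ≠ 0 := fun s hs => by
    refine det_one_add_ne_zero_of_norm_lt_one ?_
    rw [norm_smul, Real.norm_of_nonneg hs.1]
    exact (mul_le_of_le_one_left (norm_nonneg A) hs.2).trans_lt hA
  by_contra! hle
  obtain ⟨s, hs, h0⟩ := intermediate_value_Icc' zero_le_one hcont.continuousOn
    (show (0 : ℝ) ∈ Icc _ _ from ⟨by simpa using hle, by simp [ContinuousLinearMap.det]⟩)
  exact hne s hs h0

theorem bijective_id_add_of_lipschitzWith_lt_one (hK : K < 1) (hh : LipschitzWith K h) :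
    Bijective fun x => x + h x := by
  have happrox : ApproximatesLinearOn (fun x => x + h x)
      (ContinuousLinearEquiv.refl ℝ E : E →L[ℝ] E) univ K :=
    LipschitzOnWith.approximatesLinearOn <| lipschitzOnWith_univ.2 <| by
      convert hh using 1
      ext x
      simp
  have hc : Subsingleton E ∨
      K < ‖((ContinuousLinearEquiv.refl ℝ E).symm : E →L[ℝ] E)‖₊⁻¹ := by
    rcases subsingleton_or_nontrivial E with hE | hE
    · exact .inl hE
    · exact .inr (by simpa using hK)
  exact ⟨injOn_univ.1 (happrox.injOn hc), happrox.surjective hc⟩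

theorem image_id_add_eq_of_eq_zero_of_notMem (hK : K < 1) (hh : LipschitzWith K h)
    (h0 : ∀ x ∉ U, h x = 0) : (fun x => x + h x) '' U = U := by
  have hcompl : (fun x => x + h x) '' Uᶜ = Uᶜ :=
    (EqOn.image_eq fun x hx => by simp [h0 x hx]).trans (image_id _)
  rwa [image_compl_eq (bijective_id_add_of_lipschitzWith_lt_one hK hh), compl_inj_iff] at hcompl

theorem det_one_add_fderiv_pos_of_lipschitzWith_lt_one (hK : K < 1) (hh : LipschitzWith K h)
    (x : E) : 0 < (1 + fderiv ℝ h x).det :=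
  det_one_add_pos_of_norm_lt_one ((norm_fderiv_le_of_lipschitz ℝ hh).trans_lt hK)

end CompleteSpace

variable [FiniteDimensional ℝ E] [MeasurableSpace E] [BorelSpace E] (μ : Measure E)
  [μ.IsAddHaarMeasure]

theorem integrableOn_det_one_add_fderiv_of_lipschitzWith_lt_one (hK : K < 1)
    (hh : LipschitzWith K h) (hU : IsOpen U) (hμU : μ U ≠ ⊤) (h0 : ∀ x ∉ U, h x = 0)
    (hd : DifferentiableOn ℝ h U) :
    IntegrableOn (fun x => (1 + fderiv ℝ h x).det) U μ := by
  have key := integrableOn_image_iff_integrableOn_abs_det_fderiv_smul μ hU.measurableSet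
    (fun _ => hasFDerivWithinAt_id_add hU hd)
    (bijective_id_add_of_lipschitzWith_lt_one hK hh).injective.injOn fun _ => (1 : ℝ)
  rw [image_id_add_eq_of_eq_zero_of_notMem hK hh h0] at key
  simpa only [smul_eq_mul, mul_one,
    abs_of_pos (det_one_add_fderiv_pos_of_lipschitzWith_lt_one hK hh _)] using
    key.1 (integrableOn_const hμU)

theorem integral_det_one_add_fderiv_of_lipschitzWith_lt_one (hK : K < 1)
    (hh : LipschitzWith K h) (hU : IsOpen U) (h0 : ∀ x ∉ U, h x = 0)
    (hd : DifferentiableOn ℝ h U) :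
    ∫ x in U, (1 + fderiv ℝ h x).det ∂μ = μ.real U := by
  have key := integral_image_eq_integral_abs_det_fderiv_smul μ hU.measurableSet
    (fun _ => hasFDerivWithinAt_id_add hU hd)
    (bijective_id_add_of_lipschitzWith_lt_one hK hh).injective.injOn fun _ => (1 : ℝ)
  rw [image_id_add_eq_of_eq_zero_of_notMem hK hh h0] at key
  simpa only [smul_eq_mul, mul_one, integral_const, measureReal_restrict_apply_univ,
    abs_of_pos (det_one_add_fderiv_pos_of_lipschitzWith_lt_one hK hh _)] using key.symm

theorem integral_det_one_add_fderiv_of_lipschitzWith (hh : LipschitzWith K h) (hU : IsOpen U)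
    (hμU : μ U ≠ ⊤) (h0 : ∀ x ∉ U, h x = 0) (hd : DifferentiableOn ℝ h U) :
    ∫ x in U, (1 + fderiv ℝ h x).det ∂μ = μ.real U := by
  -- Each `t i` satisfies `t i * K < 1`, so the polynomial `t ↦ det (1 + t • Dh)` is interpolated at
  -- nodes for which `t i • h` is a contraction.
  let t : ℕ → ℝ := fun i => ((K + 1) * (i + 1))⁻¹
  have ht : Injective t := fun i j hij => by
    have hK : (K + 1 : ℝ) ≠ 0 := by positivity
    simpa [t, hK] using hij
  obtain ⟨c, hc⟩ := exists_det_one_add_eq_sum_mul_det_one_add_smul (V := E) ht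
  have hsum : ∑ i ∈ Finset.range (Module.finrank ℝ E + 1), c i = 1 := by simpa using (hc 0).symm
  have hlip (i : ℕ) : LipschitzWith (‖t i‖₊ * K) (t i • h) := (lipschitzWith_smul (t i)).comp hh
  have hlt (i : ℕ) : ‖t i‖₊ * K < 1 := by
    have hpos : 0 < t i := by positivity
    rw [← NNReal.coe_lt_coe, NNReal.coe_mul, coe_nnnorm, Real.norm_of_nonneg hpos.le,
      NNReal.coe_one, inv_mul_lt_one₀ (by positivity)]
    nlinarith [K.coe_nonneg, mul_nonneg K.coe_nonneg (i.cast_nonneg (α := ℝ)),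
      i.cast_nonneg (α := ℝ)]
  have hsupp (i : ℕ) : ∀ x ∉ U, (t i • h) x = 0 := fun x hx => by simp [h0 x hx]
  have hint (i : ℕ) : IntegrableOn (fun x => (1 + t i • fderiv ℝ h x).det) U μ := by
    simpa only [fderiv_const_smul_field, Pi.smul_apply] using
      integrableOn_det_one_add_fderiv_of_lipschitzWith_lt_one μ (hlt i) (hlip i) hU hμU (hsupp i)
        (hd.const_smul (t i))
  have hval (i : ℕ) : ∫ x in U, (1 + t i • fderiv ℝ h x).det ∂μ = μ.real U := by
    simpa only [fderiv_const_smul_field, Pi.smul_apply] using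
      integral_det_one_add_fderiv_of_lipschitzWith_lt_one μ (hlt i) (hlip i) hU (hsupp i)
        (hd.const_smul (t i))
  calc ∫ x in U, (1 + fderiv ℝ h x).det ∂μ
      = ∫ x in U, ∑ i ∈ Finset.range (Module.finrank ℝ E + 1),
          c i * (1 + t i • fderiv ℝ h x).det ∂μ := by
        congr 1 with x
        exact hc (fderiv ℝ h x)
    _ = ∑ i ∈ Finset.range (Module.finrank ℝ E + 1), c i * μ.real U := by
        rw [integral_finsetSum _ fun i _ => (hint i).const_mul (c i)]
        simp_rw [integral_const_mul, hval]
    _ = μ.real U := by rw [← Finset.sum_mul, hsum, one_mul]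

theorem integral_det_fderiv_of_lipschitzWith_of_eqOn_id {g : E → E} (hg : LipschitzWith K g)
    (hU : IsOpen U) (hμU : μ U ≠ ⊤) (hgU : EqOn g id Uᶜ) (hd : DifferentiableOn ℝ g U) :
    ∫ x in U, (fderiv ℝ g x).det ∂μ = μ.real U := by
  rw [← integral_det_one_add_fderiv_of_lipschitzWith μ (hg.sub LipschitzWith.id) hU hμU
    (fun x hx => sub_eq_zero.2 (hgU hx)) (hd.sub differentiableOn_id)]
  refine setIntegral_congr_fun hU.measurableSet fun x hx => ?_
  have hfderiv : fderiv ℝ (fun y => g y - id y) x = fderiv ℝ g x - 1 :=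
    ((hd.hasFDerivAt (hU.mem_nhds hx)).sub (hasFDerivAt_id x)).fderiv
  simp only [hfderiv, add_sub_cancel]

end Jacobian

section Brouwer

theorem exists_pos_forall_le_norm_sub_of_hasCompactSupport {E : Type*}
    [NormedAddCommGroup E] [ProperSpace E] {k : E → E}
    (hk : Continuous k) (hs : HasCompactSupport k) (hfix : ∀ x, ¬ IsFixedPt k x) :
    ∃ δ > 0, ∀ x, δ ≤ ‖x - k x‖ := by
  have htend : Tendsto (fun x => ‖x - k x‖) (cocompact E) atTop := by
    refine (tendsto_norm_cocompact_atTop (E := E)).congr' ?_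
    filter_upwards [hs.compl_mem_cocompact] with x hx
    rw [image_eq_zero_of_notMem_tsupport hx, sub_zero]
  obtain ⟨x₀, hx₀⟩ := (show Continuous fun x => ‖x - k x‖ by fun_prop).exists_forall_le htend
  exact ⟨‖x₀ - k x₀‖, norm_pos_iff.2 (sub_ne_zero.2 (Ne.symm (hfix x₀))), hx₀⟩

section NormedSpace

variable {E : Type*} [NormedAddCommGroup E] [NormedSpace ℝ E] {r : ℝ} {y : E}

/-- The radial retraction of a normed space onto the closed ball of radius `r > 0` centred at the
origin. Using `max r ‖y‖` as the denominator covers the points inside and outside the ball by one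
formula. -/
noncomputable def radialClamp (r : ℝ) (y : E) : E :=
  (r / max r ‖y‖) • y

theorem radialClamp_of_le_norm (h : r ≤ ‖y‖) : radialClamp r y = (r / ‖y‖) • y := by
  rw [radialClamp, max_eq_right h]

theorem radialClamp_of_norm_le (hr : 0 < r) (h : ‖y‖ ≤ r) : radialClamp r y = y := by
  rw [radialClamp, max_eq_left h, div_self hr.ne', one_smul]

theorem norm_radialClamp_of_le_norm (hr : 0 < r) (h : r ≤ ‖y‖) : ‖radialClamp r y‖ = r := by
  rw [radialClamp_of_le_norm h, norm_smul, norm_div, norm_norm, Real.norm_of_nonneg hr.le,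
    div_mul_cancel₀ _ (hr.trans_le h).ne']

theorem radialClamp_smul_of_le_norm {c : ℝ} (hc : 1 ≤ c) (h : r ≤ ‖y‖) :
    radialClamp r (c • y) = radialClamp r y := by
  have hc0 : 0 < c := one_pos.trans_le hc
  have hcy : ‖c • y‖ = c * ‖y‖ := by rw [norm_smul, Real.norm_of_nonneg hc0.le]
  have hle : r ≤ ‖c • y‖ := h.trans <| hcy ▸ le_mul_of_one_le_left (norm_nonneg y) hc
  rw [radialClamp_of_le_norm hle, radialClamp_of_le_norm h, hcy, smul_smul, div_mul_eq_mul_div,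
    mul_comm c, mul_div_mul_right _ _ hc0.ne']

theorem lipschitzWith_radialClamp (hr : 0 < r) : LipschitzWith 2 (radialClamp r : E → E) := by
  refine LipschitzWith.of_dist_le_mul fun x y => ?_
  simp only [radialClamp, dist_eq_norm, NNReal.coe_ofNat]
  set a := max r ‖x‖
  set b := max r ‖y‖
  have ha : 0 < a := hr.trans_le (le_max_left _ _)
  have hb : 0 < b := hr.trans_le (le_max_left _ _)
  have hab : |b - a| ≤ ‖x - y‖ := by
    rw [abs_sub_comm]
    refine (abs_max_sub_max_le_max r ‖x‖ r ‖y‖).trans ?_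
    simpa using abs_norm_sub_norm_le x y
  have hra : r / a ≤ 1 := (div_le_one ha).2 (le_max_left _ _)
  have hyb : ‖y‖ / b ≤ 1 := (div_le_one hb).2 (le_max_right _ _)
  calc ‖(r / a) • x - (r / b) • y‖
      = ‖(r / a) • (x - y) + (r / a * ((b - a) / b)) • y‖ := by
        congr 1
        rw [smul_sub, sub_add, ← sub_smul]
        congr 2
        field_simp
        ring
    _ ≤ ‖(r / a) • (x - y)‖ + ‖(r / a * ((b - a) / b)) • y‖ := norm_add_le _ _
    _ = r / a * ‖x - y‖ + r / a * (|b - a| * (‖y‖ / b)) := by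
        rw [norm_smul, norm_smul, Real.norm_eq_abs, Real.norm_eq_abs, abs_mul, abs_div (b - a),
          abs_of_pos (div_pos hr ha), abs_of_pos hb]
        ring
    _ ≤ 1 * ‖x - y‖ + 1 * (‖x - y‖ * 1) := by gcongr
    _ = 2 * ‖x - y‖ := by ring

theorem differentiableAt_radialClamp_comp_of_le_norm {E F : Type*}
    [NormedAddCommGroup E] [NormedSpace ℝ E] [NormedAddCommGroup F] [InnerProductSpace ℝ F]
    {r : ℝ} (hr : 0 < r) {f : E → F} {x : E} (hf : DifferentiableAt ℝ f x)
    (h : ∀ᶠ y in 𝓝 x, r ≤ ‖f y‖) :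
    DifferentiableAt ℝ (fun y => radialClamp r (f y)) x := by
  have hne : f x ≠ 0 := norm_pos_iff.1 (hr.trans_le h.self_of_nhds)
  have hscaled : DifferentiableAt ℝ (fun y => (r / ‖f y‖) • f y) x :=
    ((hf.norm ℝ hne).fun_inv (norm_ne_zero_iff.2 hne) |>.const_mul r).smul hf
  exact hscaled.congr_of_eventuallyEq (h.mono fun y hy => radialClamp_of_le_norm hy)

end NormedSpace

section InnerProductSpace

variable {E : Type*} [NormedAddCommGroup E] [InnerProductSpace ℝ E] [FiniteDimensional ℝ E]

theorem det_fderiv_eq_zero_of_eventually_norm_eq {g : E → E} {x : E} {r : ℝ} (hr : r ≠ 0)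
    (hg : DifferentiableAt ℝ g x) (hn : ∀ᶠ y in 𝓝 x, ‖g y‖ = r) : (fderiv ℝ g x).det = 0 := by
  by_contra hdet
  have hsurj : Surjective (fderiv ℝ g x) :=
    ((Module.End.isUnit_iff _).1
      ((LinearMap.isUnit_iff_isUnit_det _).2 (isUnit_iff_ne_zero.2 hdet))).2
  obtain ⟨v, hv⟩ := hsurj (g x)
  have hconst : HasFDerivAt (fun y => ‖g y‖ ^ 2) (0 : E →L[ℝ] ℝ) x :=
    (hasFDerivAt_const (r ^ 2) x).congr_of_eventuallyEq (hn.mono fun y hy => by simp [hy])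
  have horth := congrArg (fun L : E →L[ℝ] ℝ => L v) (hg.hasFDerivAt.norm_sq.unique hconst)
  simp [hv, hn.self_of_nhds, hr] at horth

theorem exists_norm_ne_of_lipschitzWith_of_eqOn_id {K : ℝ≥0} {g : E → E} {U : Set E} {r : ℝ}
    (hg : LipschitzWith K g) (hU : IsOpen U) (hUb : Bornology.IsBounded U) (hUne : U.Nonempty)
    (hgU : EqOn g id Uᶜ) (hd : DifferentiableOn ℝ g U) (hr : r ≠ 0) : ∃ x ∈ U, ‖g x‖ ≠ r := by
  borelize E
  by_contra! hnorm
  let μ : Measure E := Measure.addHaar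
  have hdet : ∀ x ∈ U, (fderiv ℝ g x).det = 0 := fun x hx =>
    det_fderiv_eq_zero_of_eventually_norm_eq hr (hd.differentiableAt (hU.mem_nhds hx))
      (eventually_of_mem (hU.mem_nhds hx) hnorm)
  have hvol : μ.real U = 0 := by
    rw [← integral_det_fderiv_of_lipschitzWith_of_eqOn_id μ hg hU hUb.measure_lt_top.ne hgU hd,
      setIntegral_eq_zero_of_forall_eq_zero hdet]
  exact (ENNReal.toReal_pos (hU.measure_pos μ hUne).ne' hUb.measure_lt_top.ne).ne' hvol

theorem exists_norm_lt_of_lipschitzWith_of_eq_smul {K : ℝ≥0} {f : E → E} {r c : ℝ}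
    (hr : 0 < r) (hc : 1 ≤ c) (hf : LipschitzWith K f) (hd : Differentiable ℝ f)
    (hout : ∀ x, r ≤ ‖x‖ → f x = c • x) : ∃ x, ‖f x‖ < r := by
  by_contra! hle
  let g : E → E := fun x => radialClamp r (f x) + (x - radialClamp r x)
  have hin : EqOn g (fun x => radialClamp r (f x)) (ball 0 r) := fun x hx => by
    simp only [g, radialClamp_of_norm_le hr (mem_ball_zero_iff.1 hx).le, sub_self, add_zero]
  have hid : EqOn g id (ball 0 r)ᶜ := fun x hx => by
    have hx' : r ≤ ‖x‖ := by simpa using hx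
    simp only [g, hout x hx', radialClamp_smul_of_le_norm hc hx', add_sub_cancel, id]
  have hclamp := lipschitzWith_radialClamp (E := E) hr
  have hlip : LipschitzWith _ g := (hclamp.comp hf).add (LipschitzWith.id.sub hclamp)
  have hdiff : DifferentiableOn ℝ g (ball 0 r) := DifferentiableOn.congr (fun x _ =>
    (differentiableAt_radialClamp_comp_of_le_norm hr (hd x)
      (.of_forall hle)).differentiableWithinAt) hin
  obtain ⟨x, hx, hne⟩ := exists_norm_ne_of_lipschitzWith_of_eqOn_id hlip isOpen_ball isBounded_ball
    (nonempty_ball.2 hr) hid hdiff hr.ne'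
  exact hne (by rw [hin hx, norm_radialClamp_of_le_norm hr (hle x)])

theorem exists_isFixedPt_of_contDiff_of_hasCompactSupport {q : E → E} (hq : ContDiff ℝ 1 q)
    (hs : HasCompactSupport q) : ∃ x, IsFixedPt q x := by
  by_contra! hfix
  obtain ⟨δ, hδ, hδq⟩ := exists_pos_forall_le_norm_sub_of_hasCompactSupport hq.continuous hs hfix
  obtain ⟨C, hC⟩ := hq.lipschitzWith_of_hasCompactSupport hs (by simp)
  obtain ⟨r, hδr, hr⟩ := hs.isCompact.isBounded.subset_ball_lt δ 0
  have hout : ∀ x, r ≤ ‖x‖ → (r / δ) • (x - q x) = (r / δ) • x := fun x hx => by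
    have hqx : q x = 0 :=
      image_eq_zero_of_notMem_tsupport fun hx' => hx.not_gt (by simpa using hr hx')
    rw [hqx, sub_zero]
  obtain ⟨x, hx⟩ := exists_norm_lt_of_lipschitzWith_of_eq_smul (hδ.trans hδr)
    ((one_le_div hδ).2 hδr.le) ((lipschitzWith_smul (r / δ)).comp (LipschitzWith.id.sub hC))
    ((differentiable_id.sub (hq.differentiable (by simp))).const_smul (r / δ)) hout
  refine hx.not_ge ?_
  calc r = r / δ * δ := (div_mul_cancel₀ r hδ.ne').symm
    _ ≤ r / δ * ‖x - q x‖ := mul_le_mul_of_nonneg_left (hδq x) (div_pos (hδ.trans hδr) hδ).le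
    _ = ‖(r / δ) • (x - q x)‖ := by
      rw [norm_smul, Real.norm_of_nonneg (div_pos (hδ.trans hδr) hδ).le]

theorem exists_isFixedPt_of_continuous_of_hasCompactSupport {k : E → E} (hk : Continuous k)
    (hs : HasCompactSupport k) : ∃ x, IsFixedPt k x := by
  by_contra! hfix
  obtain ⟨δ, hδ, hδk⟩ := exists_pos_forall_le_norm_sub_of_hasCompactSupport hk hs hfix
  obtain ⟨q, hq, hqk, hqs⟩ := hk.exists_contDiff_approx 1 (ε := fun _ => δ) continuous_const
    fun _ => hδ
  obtain ⟨x, hx⟩ := exists_isFixedPt_of_contDiff_of_hasCompactSupport hq (hs.mono hqs)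
  refine (hδk x).not_gt ?_
  simpa only [hx.eq, dist_eq_norm] using hqk x

end InnerProductSpace

theorem exists_isFixedPt_of_continuous_of_isBounded_range {E : Type*} [NormedAddCommGroup E]
    [NormedSpace ℝ E] [FiniteDimensional ℝ E] {φ : E → E} (hφ : Continuous φ)
    (hb : Bornology.IsBounded (range φ)) : ∃ x, IsFixedPt φ x := by
  obtain ⟨R, hR⟩ := hb.subset_closedBall 0
  have hφR (x : E) : ‖φ x‖ ≤ R := by simpa using hR (mem_range_self x)
  obtain ⟨η, hη1, -, hηs, hη⟩ := exists_continuous_one_zero_of_isCompact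
    (isCompact_closedBall (0 : E) R) isClosed_empty (disjoint_empty _)
  let T := toEuclidean (E := E)
  have hk : Continuous fun y => T (η (T.symm y) • φ (T.symm y)) := by fun_prop
  have hks : HasCompactSupport fun y => T (η (T.symm y) • φ (T.symm y)) :=
    ((hηs.smul_right (f' := φ)).comp_homeomorph T.symm.toHomeomorph).comp_left (map_zero T)
  obtain ⟨y, hy⟩ := exists_isFixedPt_of_continuous_of_hasCompactSupport hk hks
  have hfix : η (T.symm y) • φ (T.symm y) = T.symm y := T.eq_symm_apply.2 hy
  have hmem : T.symm y ∈ closedBall 0 R := by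
    rw [mem_closedBall_zero_iff, ← hfix, norm_smul, Real.norm_of_nonneg (hη _).1]
    exact (mul_le_of_le_one_left (norm_nonneg _) (hη _).2).trans (hφR _)
  exact ⟨T.symm y, by rwa [hη1 hmem, Pi.one_apply, one_smul] at hfix⟩

end Brouwer

theorem poincare_miranda {ι : Type*} [Finite ι] {a b c d : ι → ℝ} (hab : a ≤ b)
    {f : (ι → ℝ) → ι → ℝ} (hf : ContinuousOn f (Icc a b))
    (hlower : ∀ x ∈ Icc a b, ∀ i, x i = a i → f x i ≤ c i)
    (hupper : ∀ x ∈ Icc a b, ∀ i, x i = b i → d i ≤ f x i) :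
    Icc c d ⊆ f '' Icc a b := by
  have := Fintype.ofFinite ι
  intro y hy
  let P : (ι → ℝ) → ι → ℝ := fun x i => max (a i) (min (b i) (x i))
  have hP : Continuous P := by fun_prop
  have hPmem (x : ι → ℝ) : P x ∈ Icc a b :=
    ⟨fun _ => le_max_left _ _, fun i => max_le (hab i) (min_le_left _ _)⟩
  have hφ : ContinuousOn (fun x => x - f x + y) (Icc a b) := by fun_prop
  obtain ⟨x, hx⟩ := exists_isFixedPt_of_continuous_of_isBounded_range
    (hφ.comp_continuous hP hPmem) <|
    (isCompact_Icc.image_of_continuousOn hφ).isBounded.subset <|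
      range_subset_iff.2 fun x => mem_image_of_mem _ (hPmem x)
  refine ⟨P x, hPmem x, funext fun i => ?_⟩
  have hxi : P x i - f (P x) i + y i = x i := congrFun hx i
  have hPx : P x i = max (a i) (min (b i) (x i)) := rfl
  rcases lt_or_ge (b i) (x i) with hbx | hxb
  · have hPi : P x i = b i := by rw [hPx, min_eq_left hbx.le, max_eq_right (hab i)]
    linarith [hupper (P x) (hPmem x) i hPi, hy.2 i]
  rcases lt_or_ge (x i) (a i) with hxa | hax
  · have hPi : P x i = a i := by rw [hPx, min_eq_right hxb, max_eq_left hxa.le]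
    linarith [hlower (P x) (hPmem x) i hPi, hy.1 i]
  · have hPi : P x i = x i := by rw [hPx, min_eq_right hxb, max_eq_right hax]
    linarith

theorem exists_Icc_subset_of_mem_nhds_pi {ι : Type*} [Finite ι] {x : ι → ℝ} {s : Set (ι → ℝ)}
    (hs : s ∈ 𝓝 x) : ∃ a b : ι → ℝ, (∀ i, a i < b i) ∧ Icc a b ⊆ s := by
  have := Fintype.ofFinite ι
  obtain ⟨r, hr, hball⟩ := nhds_basis_closedBall.mem_iff.1 hs
  refine ⟨fun i => x i - r, fun i => x i + r, fun i => by linarith, ?_⟩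
  simpa only [← pi_univ_Icc, ← Real.closedBall_eq_Icc, ← closedBall_pi x hr.le] using hball

theorem exists_pos_le_infDist_of_isCompact_of_isClosed {X : Type*} [PseudoMetricSpace X]
    {A B : Set X} (hA : IsCompact A) (hB : IsClosed B) (hBne : B.Nonempty) (hAB : Disjoint A B) :
    ∃ r > 0, ∀ x ∈ A, r ≤ infDist x B := by
  obtain ⟨r, hr, hlt⟩ := exists_pos_forall_lt_edist hA hB hAB
  refine ⟨r, hr, fun x hx => (le_infDist hBne).2 fun y hy => ?_⟩
  have hxy := (hlt x hx y hy).le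
  rwa [edist_dist, ENNReal.le_ofReal_iff_toReal_le ENNReal.coe_ne_top dist_nonneg] at hxy

section HausdorffMeasure

variable {X : Type*} [MetricSpace X]

theorem exists_lipschitzWith_Icc_subset_image {ι : Type*} [Fintype ι] {a b : ι → ℝ} (hab : a ≤ b)
    {f : (ι → ℝ) → X} (hf : ContinuousOn f (Icc a b))
    (hfaces : ∀ i, ∀ x ∈ Icc a b, ∀ y ∈ Icc a b, x i = a i → y i = b i → f x ≠ f y) :
    ∃ g : X → ι → ℝ, LipschitzWith 1 g ∧
      ∃ d : ι → ℝ, (∀ i, 0 < d i) ∧ Icc 0 d ⊆ g '' (f '' Icc a b) := by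
  let face (t : ι → ℝ) (i : ι) : Set (ι → ℝ) := Icc a b ∩ {x | x i = t i}
  have hface (t : ι → ℝ) (i : ι) : IsCompact (f '' face t i) :=
    (isCompact_Icc.inter_right
      (isClosed_eq (continuous_apply i) continuous_const)).image_of_continuousOn
        (hf.mono inter_subset_left)
  have hdisj (i : ι) : Disjoint (f '' face b i) (f '' face a i) := by
    refine disjoint_left.2 ?_
    rintro _ ⟨y, hy, rfl⟩ ⟨x, hx, hxy⟩
    exact hfaces i x hx.1 y hy.1 hx.2 hy.2 hxy
  have hne (i : ι) : (f '' face a i).Nonempty := ⟨f a, a, ⟨left_mem_Icc.2 hab, rfl⟩, rfl⟩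
  have hsep (i : ι) := exists_pos_le_infDist_of_isCompact_of_isClosed (hface b i)
    (hface a i).isClosed (hne i) (hdisj i)
  choose d hd hdle using hsep
  let g : X → ι → ℝ := fun z i => infDist z (f '' face a i)
  have hg : LipschitzWith 1 g := LipschitzWith.of_dist_le_mul fun z w =>
    (dist_pi_le_iff (by positivity)).2 fun i => (lipschitz_infDist_pt _).dist_le_mul z w
  refine ⟨g, hg, d, hd, ?_⟩
  have hlower : ∀ x ∈ Icc a b, ∀ i, x i = a i → g (f x) i = 0 := fun x hx i hi =>
    infDist_zero_of_mem (mem_image_of_mem f ⟨hx, hi⟩)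
  have hupper : ∀ x ∈ Icc a b, ∀ i, x i = b i → d i ≤ g (f x) i := fun x hx i hi =>
    hdle i (f x) (mem_image_of_mem f ⟨hx, hi⟩)
  rw [← image_comp]
  exact poincare_miranda hab (hg.continuous.comp_continuousOn hf)
    (fun x hx i hi => (hlower x hx i hi).le) hupper

variable [MeasurableSpace X] [BorelSpace X]

theorem hausdorffMeasure_image_Icc_pos {ι : Type*} [Fintype ι] {a b : ι → ℝ} (hab : a ≤ b)
    {f : (ι → ℝ) → X} (hf : ContinuousOn f (Icc a b))
    (hfaces : ∀ i, ∀ x ∈ Icc a b, ∀ y ∈ Icc a b, x i = a i → y i = b i → f x ≠ f y) :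
    0 < μH[Fintype.card ι] (f '' Icc a b) := by
  obtain ⟨g, hg, d, hd, hsub⟩ := exists_lipschitzWith_Icc_subset_image hab hf hfaces
  have hbox : 0 < volume (Icc 0 d) := by
    simp [Real.volume_Icc_pi, pos_iff_ne_zero, Finset.prod_ne_zero_iff, hd]
  calc 0 < volume (Icc 0 d) := hbox
    _ ≤ volume (g '' (f '' Icc a b)) := measure_mono hsub
    _ = μH[Fintype.card ι] (g '' (f '' Icc a b)) := by rw [hausdorffMeasure_pi_real]
    _ ≤ μH[Fintype.card ι] (f '' Icc a b) := by
      simpa using hg.hausdorffMeasure_image_le (Nat.cast_nonneg (Fintype.card ι)) (f '' Icc a b)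

theorem hausdorffMeasure_image_pos {E : Type*} [NormedAddCommGroup E] [NormedSpace ℝ E]
    [FiniteDimensional ℝ E] {f : E → X} {s : Set E} (hf : ContinuousOn f s) (hinj : InjOn f s)
    (hs : (interior s).Nonempty) : 0 < μH[Module.finrank ℝ E] (f '' s) := by
  obtain ⟨x, hx⟩ := hs
  let T : (Fin (Module.finrank ℝ E) → ℝ) ≃L[ℝ] E := .ofFinrankEq (by simp)
  have hnhds : T ⁻¹' s ∈ 𝓝 (T.symm x) := T.continuous.continuousAt.preimage_mem_nhds <| by
    simpa using mem_interior_iff_mem_nhds.1 hx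
  obtain ⟨a, b, hab, hIcc⟩ := exists_Icc_subset_of_mem_nhds_pi hnhds
  have hpos := hausdorffMeasure_image_Icc_pos (f := f ∘ T) (fun i => (hab i).le)
    (hf.comp T.continuous.continuousOn hIcc) fun i x hx y hy hxa hyb hxy => by
      have hxy' : x = y := T.injective (hinj (hIcc hx) (hIcc hy) hxy)
      exact (hab i).ne (hxa.symm.trans ((congrFun hxy' i).trans hyb))
  rw [Fintype.card_fin] at hpos
  refine hpos.trans_le (measure_mono ?_)
  rintro _ ⟨x, hx, rfl⟩
  exact mem_image_of_mem f (hIcc hx)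

end HausdorffMeasure

theorem hausdorffMeasure_univ_pos_of_metric_inducing_euclidean_general {E X : Type*}
    [NormedAddCommGroup E] [NormedSpace ℝ E] [FiniteDimensional ℝ E] [ρ : MetricSpace X]
    {f : E → X} {s : Set E} (hf : ContinuousOn f s) (hinj : InjOn f s)
    (hs : (interior s).Nonempty) :
    0 < hausdorffOuterMeasure ρ (Module.finrank ℝ E) (f '' s) := by
  borelize X
  rw [hausdorffOuterMeasure, ← Measure.mkMetric_toOuterMeasure]
  exact hausdorffMeasure_image_pos hf hinj hs

/-- If `ρ` is a metric on `ℝⁿ` (`n ≥ 1`) inducing the Euclidean topology, then the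
`n`-dimensional Hausdorff measure of `ℝⁿ` with respect to `ρ` is strictly positive. -/
theorem hausdorffMeasure_univ_pos_of_metric_inducing_euclidean
    (n : ℕ) (hn : 1 ≤ n) (ρ : MetricSpace (EuclideanSpace ℝ (Fin n)))
    (hρ : ρ.toUniformSpace.toTopologicalSpace =
      (inferInstance : TopologicalSpace (EuclideanSpace ℝ (Fin n)))) :
    0 < hausdorffOuterMeasure ρ n (Set.univ : Set (EuclideanSpace ℝ (Fin n))) := by
  have hid : Continuous[inferInstance, ρ.toUniformSpace.toTopologicalSpace] id :=
    continuous_id_iff_le.2 hρ.ge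
  simpa using @hausdorffMeasure_univ_pos_of_metric_inducing_euclidean_general _ _ _ _ _ ρ id univ
    (@Continuous.continuousOn _ _ _ ρ.toUniformSpace.toTopologicalSpace _ _ hid)
    (injOn_id univ) (by simp)
end

section
/- For every n ≥ 1 there exists a metric ρ on ℝⁿ (not inducing the Euclidean topology) such that the n-dimensional Hausdorff measure of ℝⁿ with respect to ρ vanishes: ℋⁿ_ρ(ℝⁿ) = 0. -/
open MeasureTheory

/-!
The Cantor set `𝒞` is covered by two copies of itself shrunk by the factor `1 / 3`, so its finite
Lebesgue measure is at most `2 / 3` of itself, i.e. zero; hence so is its `d`-dimensional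
Hausdorff measure for every `d ≥ 1`. A set `X` of cardinality `𝔠` is in bijection with `𝒞`, and the
distance transported from `𝒞` makes it an isometric copy of `𝒞`: it is compact and has measure zero.
In particular, the transported topology is not any given noncompact one.
-/

open Set Function Module Topology
open scoped ENNReal Cardinal

theorem addHaar_eq_zero_of_subset_iUnion_homothety {ι E : Type*} [Fintype ι]
    [NormedAddCommGroup E] [NormedSpace ℝ E] [FiniteDimensional ℝ E] [MeasurableSpace E]
    [BorelSpace E] (μ : Measure E) [μ.IsAddHaarMeasure] {s : Set E} (hs : μ s ≠ ∞)
    (c : ι → E) (r : ι → ℝ) (hr : ∑ i, ENNReal.ofReal |r i ^ finrank ℝ E| < 1)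
    (hsub : s ⊆ ⋃ i, AffineMap.homothety (c i) (r i) '' s) : μ s = 0 := by
  have hle : μ s ≤ (∑ i, ENNReal.ofReal |r i ^ finrank ℝ E|) * μ s :=
    calc μ s ≤ μ (⋃ i, AffineMap.homothety (c i) (r i) '' s) := measure_mono hsub
      _ ≤ ∑ i, μ (AffineMap.homothety (c i) (r i) '' s) := measure_iUnion_fintype_le μ _
      _ = (∑ i, ENNReal.ofReal |r i ^ finrank ℝ E|) * μ s := by
        simp only [Measure.addHaar_image_homothety, Finset.sum_mul]
  by_contra hne
  have hlt := (ENNReal.mul_lt_mul_iff_left hne hs).2 hr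
  rw [one_mul] at hlt
  exact hle.not_gt hlt

theorem cantorSet_subset_iUnion_homothety :
    cantorSet ⊆ ⋃ i : Fin 2, AffineMap.homothety (i : ℝ) (1 / 3 : ℝ) '' cantorSet := by
  have hleft : (· / 3) = AffineMap.homothety (0 : ℝ) (1 / 3 : ℝ) := by
    ext x
    simp [AffineMap.homothety_apply, div_eq_inv_mul]
  have hright : (fun x : ℝ ↦ (2 + x) / 3) = AffineMap.homothety (1 : ℝ) (1 / 3 : ℝ) := by
    ext x
    simp only [AffineMap.homothety_apply, vsub_eq_sub, smul_eq_mul, vadd_eq_add]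
    ring
  intro x hx
  rw [cantorSet_eq_union_halves, hleft, hright] at hx
  rw [mem_iUnion, Fin.exists_fin_two]
  simpa using hx

theorem volume_cantorSet : volume cantorSet = 0 := by
  refine addHaar_eq_zero_of_subset_iUnion_homothety volume isCompact_cantorSet.measure_ne_top
    (fun i : Fin 2 ↦ (i : ℝ)) (fun _ ↦ 1 / 3) ?_ cantorSet_subset_iUnion_homothety
  rw [Fin.sum_univ_two, ← ENNReal.ofReal_add (abs_nonneg _) (abs_nonneg _), ENNReal.ofReal_lt_one,
    finrank_self]
  norm_num

theorem hausdorffMeasure_cantorSet {d : ℝ} (hd : 1 ≤ d) : μH[d] cantorSet = 0 := by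
  refine le_antisymm ((Measure.hausdorffMeasure_mono hd cantorSet).trans_eq ?_) zero_le
  rw [hausdorffMeasure_real, volume_cantorSet]

theorem hausdorffOuterMeasure_induced {X Y : Type*} [MetricSpace Y] [MeasurableSpace Y]
    [BorelSpace Y] {f : X → Y} (hf : Injective f) {d : ℝ} (hd : 0 ≤ d) (s : Set X) :
    hausdorffOuterMeasure (.induced f hf inferInstance) d s = μH[d] (f '' s) := by
  let : MetricSpace X := .induced f hf inferInstance
  have hisom : Isometry f := fun _ _ ↦ rfl
  calc hausdorffOuterMeasure (.induced f hf inferInstance) d s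
      = OuterMeasure.comap f (.mkMetric (· ^ d)) s := by
        rw [OuterMeasure.isometry_comap_mkMetric _ hisom
          (.inl (ENNReal.monotone_rpow_of_nonneg hd))]
        rfl
    _ = μH[d] (f '' s) := by
        rw [OuterMeasure.comap_apply, OuterMeasure.coe_mkMetric, Measure.hausdorffMeasure]

theorem induced_ne_of_isCompact_range {X Y : Type*} [tX : TopologicalSpace X] [NoncompactSpace X]
    [tY : TopologicalSpace Y] {f : X → Y} (hf : IsCompact (range f)) : tY.induced f ≠ tX := by
  intro htop
  have hind : IsInducing f := ⟨htop.symm⟩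
  exact noncompact_univ X (hind.isCompact_iff.2 (by rwa [image_univ]))

theorem mk_cantorSet : #cantorSet = 𝔠 := by
  rw [Cardinal.mk_congr cantorSetEquivNatToBool]
  simp

theorem mk_euclideanSpace (ι : Type*) [Countable ι] [Nonempty ι] :
    #(EuclideanSpace ℝ ι) = 𝔠 := by
  rw [Cardinal.mk_congr (WithLp.equiv 2 (ι → ℝ)), Cardinal.mk_arrow, Cardinal.mk_real,
    Cardinal.lift_continuum, Cardinal.lift_uzero]
  refine le_antisymm ?_ (Cardinal.self_le_power _ (Cardinal.one_le_iff_ne_zero.2 ?_))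
  · exact (Cardinal.power_le_power_left Cardinal.continuum_ne_zero Cardinal.mk_le_aleph0).trans_eq
      Cardinal.continuum_power_aleph0
  · exact Cardinal.mk_ne_zero ι

theorem exists_injective_range_eq_cantorSet {X : Type*} (hX : #X = 𝔠) :
    ∃ f : X → ℝ, Injective f ∧ range f = cantorSet := by
  obtain ⟨e⟩ : Nonempty (X ≃ cantorSet) := by
    rw [← Cardinal.lift_mk_eq', hX, mk_cantorSet, Cardinal.lift_continuum, Cardinal.lift_continuum]
  refine ⟨Subtype.val ∘ e, Subtype.val_injective.comp e.injective, ?_⟩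
  rw [e.surjective.range_comp, Subtype.range_coe]

theorem exists_metric_hausdorffMeasure_univ_eq_zero_general {X : Type*} [tX : TopologicalSpace X]
    [NoncompactSpace X] (hX : #X = 𝔠) {d : ℝ} (hd : 1 ≤ d) :
    ∃ ρ : MetricSpace X, ρ.toUniformSpace.toTopologicalSpace ≠ tX ∧
      hausdorffOuterMeasure ρ d univ = 0 := by
  obtain ⟨f, hf, hrange⟩ := exists_injective_range_eq_cantorSet hX
  refine ⟨.induced f hf inferInstance, induced_ne_of_isCompact_range ?_, ?_⟩
  · rw [hrange]
    exact isCompact_cantorSet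
  · rw [hausdorffOuterMeasure_induced hf (zero_le_one.trans hd), image_univ, hrange,
      hausdorffMeasure_cantorSet hd]

/-- For every `n ≥ 1` there is a metric `ρ` on `ℝⁿ` (necessarily not inducing the Euclidean
topology) for which the `n`-dimensional Hausdorff measure of `ℝⁿ` vanishes. -/
theorem exists_metric_hausdorffMeasure_univ_eq_zero (n : ℕ) (hn : 1 ≤ n) :
    ∃ ρ : MetricSpace (EuclideanSpace ℝ (Fin n)),
      ρ.toUniformSpace.toTopologicalSpace ≠
        (inferInstance : TopologicalSpace (EuclideanSpace ℝ (Fin n))) ∧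
      hausdorffOuterMeasure ρ n (Set.univ : Set (EuclideanSpace ℝ (Fin n))) = 0 := by
  have : NeZero n := ⟨Nat.one_le_iff_ne_zero.1 hn⟩
  exact exists_metric_hausdorffMeasure_univ_eq_zero_general (mk_euclideanSpace (Fin n))
    (Nat.one_le_cast.2 hn)
end

section
/- Let (X, ρ) be a compact metric space, f : X → ℝ continuous, and for ε > 0 let f^ε(x) := min_{z ∈ X} [ f(z) + (1/ε) ρ(x,z) ]; set f^0 := f. Then the map (ε, x) ↦ f^ε(x) is jointly continuous on [0, ∞) × X. -/
/-!
In terms of the slope `t = 1 / ε`, the function `t ↦ f^{1/t}(x)` is an infimum of affine functions,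
hence concave, and so continuous on `(0, ∞)`; each `f^{1/t}` is `t`-Lipschitz, and this upgrades the
separate continuity to joint continuity. As `t → ∞` and `y → x`, points `z` far from `x` are
penalised by `t * dist y z → ∞`, which a lower bound on `f` cannot compensate, while near `x` the
values of `f` are close to `f x`.
-/

open Filter Set Topology
open scoped NNReal

section LipschitzEnvelope

variable {X : Type*} [PseudoMetricSpace X] {f : X → ℝ} {t : ℝ}

/-- The `t`-Lipschitz envelope (Pasch–Hausdorff envelope) of `f`: its infimal convolution with
`t * dist`. The regularization `f^ε` is the envelope of slope `t = 1 / ε`, so that `ε → 0⁺` becomes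
`t → ∞`. The real infimum is junk when `f z + t * dist x z` is not bounded below in `z`.
It is irreducible because unification would otherwise compare real infima term by term. -/
@[irreducible] noncomputable def lipschitzEnvelope (f : X → ℝ) (t : ℝ) (x : X) : ℝ :=
  ⨅ z, (f z + t * dist x z)

theorem le_lipschitzEnvelope {c : ℝ} {x : X} (h : ∀ z, c ≤ f z + t * dist x z) :
    c ≤ lipschitzEnvelope f t x := by
  have : Nonempty X := ⟨x⟩
  rw [lipschitzEnvelope]
  exact le_ciInf h

theorem lipschitzEnvelope_le_add (hf : BddBelow (range f)) (ht : 0 ≤ t) (x z : X) :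
    lipschitzEnvelope f t x ≤ f z + t * dist x z := by
  obtain ⟨m, hm⟩ := hf
  rw [lipschitzEnvelope]
  refine ciInf_le ⟨m, forall_mem_range.2 fun w => ?_⟩ z
  exact le_add_of_le_of_nonneg (hm (mem_range_self w)) (by positivity)

theorem lipschitzEnvelope_le_self (hf : BddBelow (range f)) (ht : 0 ≤ t) (x : X) :
    lipschitzEnvelope f t x ≤ f x := by
  simpa using lipschitzEnvelope_le_add hf ht x x

theorem lipschitzWith_lipschitzEnvelope (hf : BddBelow (range f)) (t : ℝ≥0) :
    LipschitzWith t (lipschitzEnvelope f t) := by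
  refine .of_le_add_mul t fun x y => sub_le_iff_le_add.1 <| le_lipschitzEnvelope fun z => ?_
  rw [sub_le_iff_le_add]
  calc lipschitzEnvelope f t x ≤ f z + t * dist x z := lipschitzEnvelope_le_add hf t.2 x z
    _ ≤ f z + t * (dist x y + dist y z) := by gcongr; exact dist_triangle x y z
    _ = f z + t * dist y z + t * dist x y := by ring

theorem concaveOn_lipschitzEnvelope (hf : BddBelow (range f)) (x : X) :
    ConcaveOn ℝ (Ici 0) fun t => lipschitzEnvelope f t x := by
  refine ⟨convex_Ici 0, fun s hs t ht a b ha hb hab => le_lipschitzEnvelope fun z => ?_⟩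
  calc a * lipschitzEnvelope f s x + b * lipschitzEnvelope f t x
      ≤ a * (f z + s * dist x z) + b * (f z + t * dist x z) := by
        gcongr
        · exact lipschitzEnvelope_le_add hf hs x z
        · exact lipschitzEnvelope_le_add hf ht x z
    _ = (a + b) * f z + (a * s + b * t) * dist x z := by ring
    _ = f z + (a • s + b • t) * dist x z := by rw [hab, one_mul, smul_eq_mul, smul_eq_mul]

theorem continuousOn_lipschitzEnvelope (hf : BddBelow (range f)) :
    ContinuousOn (fun p : ℝ × X => lipschitzEnvelope f p.1 p.2) (Ioi 0 ×ˢ univ) := by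
  have continuousOn_slope (x : X) : ContinuousOn (fun t => lipschitzEnvelope f t x) (Ioi 0) :=
    interior_Ici (a := (0 : ℝ)) ▸ (concaveOn_lipschitzEnvelope hf x).continuousOn_interior
  have continuousOn_bounded_slope (K : ℝ≥0) :
      ContinuousOn (fun p : ℝ × X => lipschitzEnvelope f p.1 p.2) (Ioo 0 (K : ℝ) ×ˢ univ) := by
    refine continuousOn_prod_of_continuousOn_lipschitzOnWith' _ K (fun t ht => ?_)
      fun x _ => (continuousOn_slope x).mono Ioo_subset_Ioi_self
    lift t to ℝ≥0 using ht.1.le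
    exact ((lipschitzWith_lipschitzEnvelope hf t).weaken (mod_cast ht.2.le)).lipschitzOnWith
  rintro ⟨t, x⟩ ⟨ht : 0 < t, -⟩
  obtain ⟨K, hK⟩ := exists_nat_gt t
  have hnhds : Ioo 0 (K : ℝ) ×ˢ univ ∈ 𝓝 (t, x) := prod_mem_nhds (Ioo_mem_nhds ht hK) univ_mem
  exact ((continuousOn_bounded_slope K).continuousAt hnhds).continuousWithinAt

theorem eventually_lt_lipschitzEnvelope (hf : BddBelow (range f)) {x : X}
    (hx : LowerSemicontinuousAt f x) {a : ℝ} (ha : a < f x) :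
    ∀ᶠ p : ℝ × X in atTop ×ˢ 𝓝 x, a < lipschitzEnvelope f p.1 p.2 := by
  obtain ⟨m, hm⟩ := hf
  obtain ⟨c, hac, hcx⟩ := exists_between ha
  obtain ⟨δ, hδ, hball⟩ := Metric.eventually_nhds_iff.1 (hx c hcx)
  have hpenalty : ∀ᶠ t : ℝ in atTop, c - m ≤ t * (δ / 2) :=
    (tendsto_id.atTop_mul_const (half_pos hδ)).eventually_ge_atTop _
  filter_upwards [((eventually_ge_atTop 0).and hpenalty).prod_mk
    (Metric.ball_mem_nhds x (half_pos hδ))] with ⟨t, y⟩ ⟨⟨ht, htδ⟩, hy⟩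
  refine hac.trans_le <| le_lipschitzEnvelope fun z => ?_
  rcases lt_or_ge (dist z x) δ with hz | hz
  · exact le_add_of_le_of_nonneg (hball hz).le (by positivity)
  · have hyz : δ / 2 ≤ dist y z := by
      linarith [dist_triangle_left z x y, Metric.mem_ball.1 hy]
    calc c ≤ m + t * (δ / 2) := sub_le_iff_le_add'.1 htδ
      _ ≤ f z + t * dist y z := by gcongr; exact hm (mem_range_self z)

theorem tendsto_lipschitzEnvelope_atTop (hf : BddBelow (range f)) {x : X}
    (hx : ContinuousAt f x) :
    Tendsto (fun p : ℝ × X => lipschitzEnvelope f p.1 p.2) (atTop ×ˢ 𝓝 x) (𝓝 (f x)) := by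
  have hlower := hx.lowerSemicontinuousAt
  refine tendsto_order.2 ⟨fun a => eventually_lt_lipschitzEnvelope hf hlower, fun b hb => ?_⟩
  filter_upwards [(eventually_ge_atTop 0).prod_mk (hx.eventually_lt_const hb)] with p ⟨ht, hfb⟩
  exact (lipschitzEnvelope_le_self hf ht p.2).trans_lt hfb

theorem tendsto_lipschitzEnvelope_one_div (hf : BddBelow (range f)) {x : X}
    (hx : ContinuousAt f x) :
    Tendsto (fun p : ℝ × X => lipschitzEnvelope f (1 / p.1) p.2) (𝓝[Ioi 0 ×ˢ univ] (0, x))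
      (𝓝 (f x)) := by
  have hslope : Tendsto (fun ε : ℝ => 1 / ε) (𝓝[>] 0) atTop := by
    simpa only [one_div] using tendsto_inv_nhdsGT_zero
  rw [nhdsWithin_prod_eq, nhdsWithin_univ]
  exact (tendsto_lipschitzEnvelope_atTop hf hx).comp (hslope.prodMap tendsto_id)

theorem continuousOn_lipschitzEnvelope_one_div (hf : BddBelow (range f)) :
    ContinuousOn (fun p : ℝ × X => lipschitzEnvelope f (1 / p.1) p.2) (Ioi 0 ×ˢ univ) := by
  have hslope : ContinuousOn (fun p : ℝ × X => (1 / p.1, p.2)) (Ioi 0 ×ˢ univ) :=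
    (continuousOn_const.div continuousOn_fst fun _ hp => hp.1.ne').prodMk continuousOn_snd
  exact (continuousOn_lipschitzEnvelope hf).comp hslope fun _ hp =>
    ⟨mem_Ioi.2 (one_div_pos.2 hp.1), mem_univ _⟩

end LipschitzEnvelope

theorem infConvolution_jointly_continuous_general {X : Type*} [PseudoMetricSpace X] {f : X → ℝ}
    (hbdd : BddBelow (range f)) (hf : Continuous f) :
    ContinuousOn
      (fun p : ℝ × X =>
        if p.1 = 0 then f p.2 else ⨅ z : X, (f z + (1 / p.1) * dist p.2 z))
      (Ici (0 : ℝ) ×ˢ (univ : Set X)) := by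
  rintro ⟨ε, x⟩ ⟨hε : 0 ≤ ε, -⟩
  rcases hε.eq_or_lt with rfl | hε
  · have hzero : Tendsto (fun p : ℝ × X => f p.2) (𝓝 (0, x)) (𝓝 (f x)) :=
      (hf.comp continuous_snd).tendsto (0, x)
    rw [ContinuousWithinAt, if_pos rfl]
    refine .if (hzero.mono_left (inf_le_left.trans nhdsWithin_le_nhds)) ?_
    have hsub : (Ici 0 ×ˢ univ) ∩ {p : ℝ × X | ¬p.1 = 0} ⊆ Ioi 0 ×ˢ univ :=
      fun p ⟨hp, hne⟩ => ⟨lt_of_le_of_ne hp.1 (Ne.symm hne), hp.2⟩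
    rw [← nhdsWithin_inter']
    simpa only [lipschitzEnvelope] using
      (tendsto_lipschitzEnvelope_one_div hbdd hf.continuousAt).mono_left (nhdsWithin_mono _ hsub)
  · have hpos : Ioi 0 ×ˢ univ ∈ 𝓝 (ε, x) := prod_mem_nhds (Ioi_mem_nhds hε) univ_mem
    have hcont := (continuousOn_lipschitzEnvelope_one_div hbdd).continuousAt hpos
    refine (hcont.congr ?_).continuousWithinAt
    filter_upwards [hpos] with p hp
    rw [if_neg hp.1.ne', lipschitzEnvelope]

/-- On a compact metric space, the map `(ε, x) ↦ f^ε(x)`, where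
`f^ε(x) = min_{z} (f z + (1/ε) ρ(x,z))` for `ε > 0` and `f^0 = f`, is jointly
continuous on `[0, ∞) × X`. -/
theorem infConvolution_jointly_continuous {X : Type*} [MetricSpace X] [CompactSpace X]
    [Nonempty X] (f : X → ℝ) (hf : Continuous f) :
    ContinuousOn
      (fun p : ℝ × X =>
        if p.1 = 0 then f p.2 else ⨅ z : X, (f z + (1 / p.1) * dist p.2 z))
      (Set.Ici (0 : ℝ) ×ˢ (Set.univ : Set X)) :=
  infConvolution_jointly_continuous_general (isCompact_range hf).bddBelow hf
end

section
/- Let 𝔹 denote the closed Euclidean unit ball in ℝⁿ centered at the origin, and let f : 𝔹 → ℝⁿ be a continuous map satisfying ‖f(x) − x‖ ≤ 1/2 for all x ∈ 𝔹. Then the open Euclidean ball B(0, 1/2) of radius 1/2 centered at the origin is contained in f(𝔹). In particular f(𝔹) has nonempty interior. -/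
/-!
Let `h : E → E` be `C¹` with support in a compact set `s`, and put `Fₜ = id + t • h`. For small `t`,
`Fₜ` is a diffeomorphism fixing the complement of `s`, so the change of variables formula gives
`∫ₛ det(DFₜ) • (g ∘ Fₜ) = ∫ₛ g`. If `g` is a polynomial, the left side is a polynomial in `t`, hence
it is constant and the formula persists at `t = 1`; by Stone–Weierstrass it then holds for every
continuous `g`. If `F₁` missed a point, a bump function `g` at that point would contradict it, so
`F₁` is surjective. By approximation, so is `id + h` for every continuous `h` of compact support.

Finally, let `K` be a compact set containing `y` and suppose `‖f x - x‖ < ‖x - y‖` on the frontier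
of `K`. Then `f - id` can be extended from `K` to a compactly supported map `h` with `x + h x ≠ y`
outside `K`, so the solution of `x + h x = y` lies in `K` and satisfies `f x = y`.
-/

open Filter MeasureTheory Metric Polynomial Set
open scoped NNReal Topology

/-- `φ` is a polynomial function of degree at most `N`. The bound `N` is part of the predicate so
that a pointwise integral of a family of such functions is again one. -/
def IsPolynomialOfDegreeLE {R : Type*} [CommSemiring R] (N : ℕ) (φ : R → R) : Prop :=
  ∃ P : R[X], P.natDegree ≤ N ∧ ∀ t, φ t = P.eval t

namespace IsPolynomialOfDegreeLE

section CommSemiring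

variable {R : Type*} [CommSemiring R] {M N : ℕ} {φ ψ : R → R}

theorem const (c : R) : IsPolynomialOfDegreeLE 0 fun _ : R ↦ c :=
  ⟨C c, by simp, by simp⟩

theorem const_add_mul_const (a b : R) : IsPolynomialOfDegreeLE 1 fun t : R ↦ a + t * b :=
  ⟨C b * X + C a, natDegree_linear_le, fun t ↦ by
    simp only [eval_add, eval_mul, eval_C, eval_X]; ring⟩

theorem add (hφ : IsPolynomialOfDegreeLE M φ) (hψ : IsPolynomialOfDegreeLE N ψ) :
    IsPolynomialOfDegreeLE (max M N) fun t ↦ φ t + ψ t := by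
  obtain ⟨P, hP, hφP⟩ := hφ
  obtain ⟨Q, hQ, hψQ⟩ := hψ
  exact ⟨P + Q, natDegree_add_le_of_le hP hQ, fun t ↦ by simp [hφP, hψQ]⟩

theorem mul (hφ : IsPolynomialOfDegreeLE M φ) (hψ : IsPolynomialOfDegreeLE N ψ) :
    IsPolynomialOfDegreeLE (M + N) fun t ↦ φ t * ψ t := by
  obtain ⟨P, hP, hφP⟩ := hφ
  obtain ⟨Q, hQ, hψQ⟩ := hψ
  exact ⟨P * Q, natDegree_mul_le_of_le hP hQ, fun t ↦ by simp [hφP, hψQ]⟩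

end CommSemiring

theorem eq_of_eventually_eq {R : Type*} [CommRing R] [IsDomain R] [TopologicalSpace R] [T1Space R]
    {N : ℕ} {φ : R → R} (hφ : IsPolynomialOfDegreeLE N φ) {a c : R} [(𝓝[≠] a).NeBot]
    (h : ∀ᶠ t in 𝓝 a, φ t = c) (t : R) : φ t = c := by
  obtain ⟨P, -, hP⟩ := hφ
  have hPc : P = C c := eq_of_infinite_eval_eq P (C c) <|
    (infinite_of_mem_nhds a h).mono fun t ht ↦ by simpa [← hP t] using ht
  rw [hP, hPc, eval_C]

theorem eq_sum_mul_eval_lagrangeBasis {F : Type*} [Field F] [CharZero F] {N : ℕ} {φ : F → F}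
    (hφ : IsPolynomialOfDegreeLE N φ) (t : F) :
    φ t = ∑ i ∈ Finset.range (N + 1),
      φ i * (Lagrange.basis (Finset.range (N + 1)) (Nat.cast : ℕ → F) i).eval t := by
  obtain ⟨P, hPN, hP⟩ := hφ
  have hdeg : P.degree < (Finset.range (N + 1)).card := by
    rw [Finset.card_range]
    exact (degree_le_of_natDegree_le hPN).trans_lt (by exact_mod_cast N.lt_succ_self)
  conv_lhs => rw [hP, Lagrange.eq_interpolate Nat.cast_injective.injOn hdeg]
  simp [Lagrange.interpolate_apply, eval_finsetSum, hP]

theorem integral {𝕜 α : Type*} [RCLike 𝕜] [MeasurableSpace α] {μ : Measure α} {N : ℕ}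
    {φ : 𝕜 → α → 𝕜} (hφ : ∀ x, IsPolynomialOfDegreeLE N fun t ↦ φ t x)
    (hint : ∀ t, Integrable (φ t) μ) :
    IsPolynomialOfDegreeLE N fun t ↦ ∫ x, φ t x ∂μ := by
  refine ⟨Lagrange.interpolate (Finset.range (N + 1)) Nat.cast fun i ↦ ∫ x, φ i x ∂μ, ?_,
    fun t ↦ ?_⟩
  · have hdeg := Lagrange.degree_interpolate_lt (s := Finset.range (N + 1))
      (fun i : ℕ ↦ ∫ x, φ i x ∂μ) (Nat.cast_injective (R := 𝕜)).injOn
    rw [Finset.card_range] at hdeg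
    exact natDegree_le_of_degree_le (Order.le_of_lt_succ hdeg)
  · simp_rw [fun x ↦ (hφ x).eq_sum_mul_eval_lagrangeBasis t]
    rw [integral_finsetSum _ fun (i : ℕ) _ ↦ (hint i).mul_const _]
    simp [integral_mul_const, Lagrange.interpolate_apply, eval_finsetSum]

end IsPolynomialOfDegreeLE

theorem isPolynomialOfDegreeLE_matrix_det_one_add_smul {R n : Type*} [CommRing R] [Fintype n]
    [DecidableEq n] (A : Matrix n n R) :
    IsPolynomialOfDegreeLE (Fintype.card n) fun t : R ↦ (1 + t • A).det := by
  refine ⟨((X : R[X]) • A.map C + (1 : Matrix n n R).map C).det, natDegree_det_X_add_C_le A 1,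
    fun t ↦ ?_⟩
  rw [← coe_evalRingHom, RingHom.map_det]
  refine congrArg Matrix.det (Matrix.ext fun i j ↦ ?_)
  by_cases hij : i = j <;> simp [hij, add_comm, mul_comm t]

theorem isPolynomialOfDegreeLE_det_one_add_smul {R M : Type*} [CommRing R] [StrongRankCondition R]
    [AddCommGroup M] [Module R M] [Module.Free R M] [Module.Finite R M] (A : M →ₗ[R] M) :
    IsPolynomialOfDegreeLE (Module.finrank R M) fun t : R ↦ LinearMap.det (1 + t • A) := by
  let b := Module.Free.chooseBasis R M
  have := isPolynomialOfDegreeLE_matrix_det_one_add_smul (LinearMap.toMatrix b b A)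
  rw [Module.finrank_eq_card_chooseBasisIndex]
  convert this using 2 with t
  rw [← LinearMap.det_toMatrix b]
  simp [LinearMap.toMatrix_one]

/-- The continuous functions whose restrictions to lines are polynomials of bounded degree: a
coordinate-free substitute for the polynomial functions on `E`. -/
def polynomialOnLines (E : Type*) [AddCommGroup E] [Module ℝ E] [TopologicalSpace E] :
    Subalgebra ℝ C(E, ℝ) where
  carrier := {g | ∃ N, ∀ x v, IsPolynomialOfDegreeLE N fun t : ℝ ↦ g (x + t • v)}
  mul_mem' := fun ⟨M, hM⟩ ⟨N, hN⟩ ↦ ⟨M + N, fun x v ↦ (hM x v).mul (hN x v)⟩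
  add_mem' := fun ⟨M, hM⟩ ⟨N, hN⟩ ↦ ⟨max M N, fun x v ↦ (hM x v).add (hN x v)⟩
  algebraMap_mem' c := ⟨0, fun _ _ ↦ .const c⟩

theorem polynomialOnLines_separatesPoints {E : Type*} [AddCommGroup E] [Module ℝ E]
    [TopologicalSpace E] [SeparatingDual ℝ E] : (polynomialOnLines E).SeparatesPoints := by
  intro x y hxy
  obtain ⟨L, hL⟩ := SeparatingDual.exists_separating_of_ne (R := ℝ) hxy
  exact ⟨L, ⟨L, ⟨1, fun a v ↦ by simpa using .const_add_mul_const (L a) (L v)⟩, rfl⟩, hL⟩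

theorem dense_of_separatesPoints {X : Type*} [TopologicalSpace X] {A : Subalgebra ℝ C(X, ℝ)}
    (hA : A.SeparatesPoints) : Dense (A : Set C(X, ℝ)) := by
  intro f
  rw [mem_closure_iff_nhds_basis
    (nhds_basis_uniformity uniformity_basis_dist.compactConvergenceUniformity)]
  rintro ⟨K, ε⟩ ⟨hK, hε⟩
  exact ContinuousMap.exists_mem_subalgebra_near_continuous_of_isCompact_of_separatesPoints
    hA f hK hε

theorem continuous_setIntegral_of_continuous_uncurry {X Y F : Type*} [TopologicalSpace X]
    [FirstCountableTopology X] [TopologicalSpace Y] [MeasurableSpace Y] [OpensMeasurableSpace Y]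
    {μ : Measure Y} [IsFiniteMeasureOnCompacts μ] [NormedAddCommGroup F] [NormedSpace ℝ F]
    [SecondCountableTopologyEither Y F] {f : X → Y → F} (hf : Continuous (Function.uncurry f))
    {s : Set Y} (hs : IsCompact s) : Continuous fun x ↦ ∫ y in s, f x y ∂μ := by
  refine continuous_iff_continuousAt.2 fun x₀ ↦ ?_
  obtain ⟨M, hM⟩ := hs.exists_bound_of_continuousOn (f := f x₀)
    (hf.comp (Continuous.prodMk_right x₀)).continuousOn
  have hbound : ∀ᶠ x in 𝓝 x₀, ∀ y ∈ s, ‖f x y‖ < M + 1 :=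
    hs.eventually_forall_of_forall_eventually fun y hy ↦
      hf.norm.continuousAt.eventually_lt_const ((hM y hy).trans_lt (lt_add_one M))
  refine continuousAt_of_dominated (bound := fun _ ↦ M + 1) ?_ ?_ ?_ ?_
  · exact .of_forall fun x ↦ (hf.comp (Continuous.prodMk_right x)).aestronglyMeasurable
  · filter_upwards [hbound] with x hx
    have hfx : Continuous (f x) := hf.comp (Continuous.prodMk_right x)
    exact (ae_restrict_iff (isClosed_le hfx.norm continuous_const).measurableSet).2
      (.of_forall fun y hy ↦ (hx y hy).le)
  · exact integrableOn_const hs.measure_ne_top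
  · exact .of_forall fun y ↦ (hf.comp (Continuous.prodMk_left y)).continuousAt

theorem bijective_id_add_of_lipschitzWith {E : Type*} [NormedAddCommGroup E] [CompleteSpace E]
    {K : ℝ≥0} (hK : K < 1) {u : E → E} (hu : LipschitzWith K u) :
    Function.Bijective fun x ↦ x + u x := by
  refine ⟨(AntilipschitzWith.id.add_lipschitzWith hu (by simpa using hK)).injective, fun y ↦ ?_⟩
  have hc : ContractingWith K fun x ↦ y - u x :=
    ⟨hK, by simpa using (LipschitzWith.const y).sub hu⟩
  exact ⟨hc.fixedPoint, eq_sub_iff_add_eq.1 hc.fixedPoint_isFixedPt.symm⟩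

theorem image_eq_of_bijective_of_eqOn_compl {α : Type*} {F : α → α} (hF : Function.Bijective F)
    {s : Set α} (hs : EqOn F id sᶜ) : F '' s = s := by
  rw [← compl_inj_iff, ← image_compl_eq hF, hs.image_eq, image_id]

section ChangeOfVariables

variable {E : Type*} [NormedAddCommGroup E] [NormedSpace ℝ E] [FiniteDimensional ℝ E]

theorem eventually_det_one_add_smul_pos (C : ℝ) :
    ∀ᶠ t : ℝ in 𝓝 0, ∀ A ∈ closedBall (0 : E →L[ℝ] E) C, 0 < (1 + t • A).det := by
  have := FiniteDimensional.proper_real (E →L[ℝ] E)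
  refine (isCompact_closedBall _ C).eventually_forall_of_forall_eventually fun A _ ↦ ?_
  have hcont : Continuous fun z : ℝ × (E →L[ℝ] E) ↦ (1 + z.1 • z.2).det :=
    ContinuousLinearMap.continuous_det.comp (by fun_prop)
  exact hcont.continuousAt.eventually_mem (lt_mem_nhds (by simp [ContinuousLinearMap.det]))

variable [MeasurableSpace E] [BorelSpace E] (μ : Measure E) [μ.IsAddHaarMeasure] {h : E → E}
  {s : Set E}

theorem eventually_setIntegral_det_mul_comp_eq (hh : ContDiff ℝ 1 h) (hc : HasCompactSupport h)
    (hs : MeasurableSet s) (hsupp : Function.support h ⊆ s) :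
    ∀ᶠ t : ℝ in 𝓝 0, ∀ g : E → ℝ,
      ∫ x in s, (1 + t • fderiv ℝ h x).det * g (x + t • h x) ∂μ = ∫ x in s, g x ∂μ := by
  obtain ⟨K, hK⟩ := hh.lipschitzWith_of_hasCompactSupport hc one_ne_zero
  have hsmall : ∀ᶠ t : ℝ in 𝓝 0, ‖t‖₊ * K < 1 :=
    (by fun_prop : Continuous fun t : ℝ ↦ ‖t‖₊ * K).tendsto' 0 0 (by simp) |>.eventually_lt_const
      one_pos
  filter_upwards [hsmall, eventually_det_one_add_smul_pos (E := E) K] with t ht hdet g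
  have hbij : Function.Bijective fun x ↦ x + t • h x :=
    bijective_id_add_of_lipschitzWith ht ((lipschitzWith_smul t).comp hK)
  have himage : (fun x ↦ x + t • h x) '' s = s :=
    image_eq_of_bijective_of_eqOn_compl hbij fun x hx ↦ by
      simp [Function.notMem_support.1 fun hx' ↦ hx (hsupp hx')]
  have hderiv (x : E) : HasFDerivAt (fun x ↦ x + t • h x) (1 + t • fderiv ℝ h x) x :=
    (hasFDerivAt_id x).add ((hh.differentiable one_ne_zero x).hasFDerivAt.const_smul t)
  have hpos (x : E) : 0 < (1 + t • fderiv ℝ h x).det :=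
    hdet _ (mem_closedBall_zero_iff.2 (norm_fderiv_le_of_lipschitz ℝ hK))
  have hcv := integral_image_eq_integral_abs_det_fderiv_smul μ hs
    (fun x _ ↦ (hderiv x).hasFDerivWithinAt) hbij.injective.injOn g
  simpa only [himage, abs_of_pos (hpos _), smul_eq_mul, eq_comm] using hcv

theorem setIntegral_det_mul_comp_eq_of_mem_polynomialOnLines (hh : ContDiff ℝ 1 h)
    (hc : HasCompactSupport h) (hs : IsCompact s) (hsupp : Function.support h ⊆ s) {g : C(E, ℝ)}
    (hg : g ∈ polynomialOnLines E) :
    ∫ x in s, (1 + fderiv ℝ h x).det * g (x + h x) ∂μ = ∫ x in s, g x ∂μ := by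
  obtain ⟨N, hN⟩ := hg
  have hcont (t : ℝ) : Continuous fun x ↦ (1 + t • fderiv ℝ h x).det * g (x + t • h x) := by
    have hfderiv := hh.continuous_fderiv one_ne_zero
    have hdet : Continuous fun x ↦ (1 + t • fderiv ℝ h x).det :=
      ContinuousLinearMap.continuous_det.comp (continuous_const.add (hfderiv.const_smul t))
    have := hh.continuous
    fun_prop
  have hpoly : IsPolynomialOfDegreeLE (Module.finrank ℝ E + N) fun t : ℝ ↦
      ∫ x in s, (1 + t • fderiv ℝ h x).det * g (x + t • h x) ∂μ :=
    .integral
      (fun x ↦ (isPolynomialOfDegreeLE_det_one_add_smul (fderiv ℝ h x).toLinearMap).mul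
        (hN x (h x)))
      fun t ↦ (hcont t).continuousOn.integrableOn_compact hs
  simpa using hpoly.eq_of_eventually_eq
    ((eventually_setIntegral_det_mul_comp_eq μ hh hc hs.measurableSet hsupp).mono
      fun t ht ↦ ht g) 1

theorem setIntegral_det_mul_comp_eq (hh : ContDiff ℝ 1 h) (hc : HasCompactSupport h)
    (hs : IsCompact s) (hsupp : Function.support h ⊆ s) (g : C(E, ℝ)) :
    ∫ x in s, (1 + fderiv ℝ h x).det * g (x + h x) ∂μ = ∫ x in s, g x ∂μ := by
  have := FiniteDimensional.proper_real E
  have hdet : Continuous fun x ↦ (1 + fderiv ℝ h x).det :=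
    ContinuousLinearMap.continuous_det.comp
      (continuous_const.add (hh.continuous_fderiv one_ne_zero))
  have hid_add : Continuous fun x ↦ x + h x := continuous_id.add hh.continuous
  have hleft : Continuous fun g : C(E, ℝ) ↦
      ∫ x in s, (1 + fderiv ℝ h x).det * g (x + h x) ∂μ :=
    continuous_setIntegral_of_continuous_uncurry ((hdet.comp continuous_snd).mul
      (continuous_eval.comp (continuous_fst.prodMk (hid_add.comp continuous_snd)))) hs
  have hright : Continuous fun g : C(E, ℝ) ↦ ∫ x in s, g x ∂μ :=
    continuous_setIntegral_of_continuous_uncurry continuous_eval hs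
  exact congrFun (hleft.ext_on (dense_of_separatesPoints polynomialOnLines_separatesPoints) hright
    fun g hg ↦ setIntegral_det_mul_comp_eq_of_mem_polynomialOnLines μ hh hc hs hsupp hg) g

end ChangeOfVariables

section Surjectivity

variable {E : Type*} [NormedAddCommGroup E] [NormedSpace ℝ E] [FiniteDimensional ℝ E]

theorem surjective_id_add_of_contDiff_of_hasCompactSupport {h : E → E} (hh : ContDiff ℝ 1 h)
    (hc : HasCompactSupport h) : Function.Surjective fun x ↦ x + h x := by
  borelize E
  have := FiniteDimensional.proper_real E
  intro p
  by_contra! hp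
  let s := tsupport h ∪ closedBall p 1
  have hs : IsCompact s := hc.isCompact.union (isCompact_closedBall p 1)
  have himage : IsClosed ((fun x ↦ x + h x) '' s) :=
    (hs.image (continuous_id.add hh.continuous)).isClosed
  obtain ⟨δ, hδ, hball⟩ := Metric.isOpen_iff.1 himage.isOpen_compl p fun ⟨x, _, hx⟩ ↦ hp x hx
  let χ : ContDiffBump p := ⟨min δ 1 / 2, min δ 1, by positivity, half_lt_self (by positivity)⟩
  have hχ_comp : ∀ x ∈ s, χ (x + h x) = 0 := fun x hx ↦
    Function.notMem_support.1 fun hχ ↦ hball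
      (ball_subset_ball (min_le_left δ 1) (χ.support_eq ▸ hχ)) (mem_image_of_mem _ hx)
  have hχ_supp : Function.support χ ⊆ s := by
    rw [χ.support_eq]
    exact (ball_subset_closedBall.trans (closedBall_subset_closedBall (min_le_right δ 1))).trans
      subset_union_right
  refine (χ.integral_pos (μ := Measure.addHaar)).ne ?_
  calc (0 : ℝ) = ∫ x in s, (1 + fderiv ℝ h x).det * χ (x + h x) ∂Measure.addHaar := by
        rw [setIntegral_congr_fun hs.measurableSet fun x hx ↦ by rw [hχ_comp x hx, mul_zero]]
        simp
    _ = ∫ x in s, χ x ∂Measure.addHaar :=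
        setIntegral_det_mul_comp_eq _ hh hc hs
          ((subset_tsupport h).trans subset_union_left) ⟨χ, χ.continuous⟩
    _ = ∫ x, χ x ∂Measure.addHaar := setIntegral_eq_integral_of_forall_compl_eq_zero
        fun x hx ↦ Function.notMem_support.1 fun hx' ↦ hx (hχ_supp hx')

theorem surjective_id_add_of_hasCompactSupport {h : E → E} (hh : Continuous h)
    (hc : HasCompactSupport h) : Function.Surjective fun x ↦ x + h x := by
  intro y
  by_contra! hy
  obtain ⟨g, hg, hgh, hsupp⟩ := hh.exists_contDiff_approx 1 (ε := fun x ↦ ‖x + h x - y‖)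
    (by fun_prop) fun x ↦ norm_pos_iff.2 (sub_ne_zero.2 (hy x))
  obtain ⟨x, rfl⟩ := surjective_id_add_of_contDiff_of_hasCompactSupport hg (hc.mono hsupp) y
  have := hgh x
  rw [add_sub_add_left_eq_sub, dist_comm, dist_eq_norm] at this
  exact this.false

theorem mem_image_of_forall_mem_frontier_norm_sub_lt {K : Set E} (hK : IsCompact K) {f : E → E}
    (hf : ContinuousOn f K) {y : E} (hy : y ∈ K)
    (hlt : ∀ x ∈ frontier K, ‖f x - x‖ < ‖x - y‖) : y ∈ f '' K := by
  have := FiniteDimensional.proper_real E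
  have := TietzeExtension.of_tvs ℝ (E := E)
  obtain ⟨u, hu⟩ := ContinuousMap.exists_restrict_eq hK.isClosed
    ⟨K.domRestrict fun x ↦ f x - x, (hf.sub continuousOn_id).domRestrict⟩
  have hu_eq : ∀ x ∈ K, u x = f x - x := fun x hx ↦ DFunLike.congr_fun hu ⟨x, hx⟩
  let S := {x | ‖x - y‖ ≤ ‖u x‖} ∩ (interior K)ᶜ
  have hS : IsClosed S :=
    (isClosed_le (by fun_prop) (by fun_prop)).inter isOpen_interior.isClosed_compl
  have hKS : Disjoint K S := disjoint_left.2 fun x hx ⟨hle, hint⟩ ↦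
    (hlt x ⟨subset_closure hx, hint⟩).not_ge (hu_eq x hx ▸ hle)
  obtain ⟨χ, hχK, hχS, hχc, hχ01⟩ := exists_continuous_one_zero_of_isCompact hK hS hKS
  obtain ⟨x, hx⟩ := surjective_id_add_of_hasCompactSupport (h := fun x ↦ χ x • u x)
    (by fun_prop) hχc.smul_right y
  by_cases hxK : x ∈ K
  · refine ⟨x, hxK, ?_⟩
    simpa [hχK hxK, hu_eq x hxK] using hx
  exfalso
  by_cases hxS : x ∈ S
  · have hxy : x = y := by simpa [hχS hxS] using hx
    exact hxK (hxy ▸ hy)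
  · have hux : ‖u x‖ < ‖x - y‖ := by
      by_contra! hle
      exact hxS ⟨hle, fun hint ↦ hxK (interior_subset hint)⟩
    have hxy : ‖x - y‖ ≤ ‖u x‖ := by
      calc ‖x - y‖ = ‖χ x • u x‖ := by rw [← hx]; simp [norm_smul]
        _ = χ x * ‖u x‖ := by rw [norm_smul, Real.norm_of_nonneg (hχ01 x).1]
        _ ≤ ‖u x‖ := mul_le_of_le_one_left (norm_nonneg _) (hχ01 x).2
    exact hux.not_ge hxy

theorem ball_subset_image_of_close_to_id_general {f : E → E} {a : E} {r ρ : ℝ} (hρ : 0 ≤ ρ)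
    (hρr : ρ < r) (hf : ContinuousOn f (closedBall a r))
    (hbound : ∀ x ∈ sphere a r, ‖f x - x‖ ≤ ρ) :
    ball a (r - ρ) ⊆ f '' closedBall a r ∧ (interior (f '' closedBall a r)).Nonempty := by
  have := FiniteDimensional.proper_real E
  have hsub : ball a (r - ρ) ⊆ f '' closedBall a r := fun y hy ↦ by
    refine mem_image_of_forall_mem_frontier_norm_sub_lt (isCompact_closedBall a r) hf
      (ball_subset_closedBall (ball_subset_ball (sub_le_self r hρ) hy)) fun x hx ↦ ?_
    rw [frontier_closedBall a (hρ.trans_lt hρr).ne'] at hx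
    calc ‖f x - x‖ ≤ ρ := hbound x hx
      _ < dist x a - dist y a := by linarith [mem_ball.1 hy, mem_sphere.1 hx]
      _ ≤ ‖x - y‖ := by linarith [dist_triangle x y a, dist_eq_norm x y]
  exact ⟨hsub, a, interior_maximal hsub isOpen_ball (mem_ball_self (sub_pos.2 hρr))⟩

end Surjectivity

/-- If `f` is continuous on the closed Euclidean unit ball `𝔹 ⊂ ℝⁿ` and
`‖f x − x‖ ≤ 1/2` on `𝔹`, then the open ball `B(0, 1/2)` is contained in `f(𝔹)`;
in particular `f(𝔹)` has nonempty interior. -/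
theorem ball_subset_image_of_close_to_id (n : ℕ)
    (f : EuclideanSpace ℝ (Fin n) → EuclideanSpace ℝ (Fin n))
    (hf : ContinuousOn f (Metric.closedBall (0 : EuclideanSpace ℝ (Fin n)) 1))
    (hbound : ∀ x ∈ Metric.closedBall (0 : EuclideanSpace ℝ (Fin n)) 1,
      ‖f x - x‖ ≤ 1 / 2) :
    Metric.ball (0 : EuclideanSpace ℝ (Fin n)) (1 / 2) ⊆
      f '' Metric.closedBall (0 : EuclideanSpace ℝ (Fin n)) 1 ∧
    (interior (f '' Metric.closedBall (0 : EuclideanSpace ℝ (Fin n)) 1)).Nonempty :=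
  sub_half (1 : ℝ) ▸ ball_subset_image_of_close_to_id_general one_half_pos.le one_half_lt_one hf
    fun x hx ↦ hbound x (sphere_subset_closedBall hx)
end

section
/- Let ρ be a metric on ℝⁿ whose induced topology coincides with the Euclidean topology. Then the closed Euclidean unit ball 𝔹 = { x ∈ ℝⁿ : ‖x‖ ≤ 1 } is compact in the metric space (ℝⁿ, ρ), and for every ε > 0 the map F^ε := (π₁^ε, …, πₙ^ε) : (𝔹, ρ) → (ℝⁿ, Euclidean) defined by π_i^ε(x) := min_{z ∈ 𝔹} [ π_i(z) + (1/ε) ρ(x,z) ] is Lipschitz: there exists C_ε > 0 with ‖F^ε(x) − F^ε(y)‖ ≤ C_ε ρ(x,y) for all x, y ∈ 𝔹; moreover F^ε → id uniformly on 𝔹 as ε → 0⁺. -/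
/-!
The infimum over `z ∈ K` of the `c`-Lipschitz functions `x ↦ f z + c * dist x z` is `c`-Lipschitz,
and choosing `z = x` shows that it is at most `f x` on `K`. It can be much smaller than `f x` only
through some `z ∈ K` with `f z` much smaller than `f x`: uniform continuity keeps such a `z` at
distance at least some `δ` from `x`, and then the penalty `c * δ` exceeds the oscillation of `f`
as soon as `c` is large. Both facts pass from coordinates to vectors because there are only
finitely many coordinates.
-/

open Set Filter Topology Bornology
open scoped NNReal ENNReal

section InfConvolution

variable {X : Type*} [PseudoMetricSpace X] {K : Set X} {f : X → ℝ} {c : ℝ} {x : X}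

/-- The infimal convolution of the restriction of `f` to `K` with `c * dist`, also known as the
Pasch–Hausdorff envelope of `f`. As a real infimum, it takes the junk value `0` where
`z ↦ f z + c * dist x z` is unbounded below on `K`, and everywhere if `K` is empty. -/
noncomputable def infConvolution (K : Set X) (f : X → ℝ) (c : ℝ) (x : X) : ℝ :=
  ⨅ z : K, (f z + c * dist x z)

theorem infConvolution_le_add_mul_dist (hf : BddBelow (f '' K)) (hc : 0 ≤ c) (x : X) {z : X}
    (hz : z ∈ K) : infConvolution K f c x ≤ f z + c * dist x z := by
  obtain ⟨m, hm⟩ := hf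
  refine ciInf_le (f := fun z : K => f z + c * dist x z) ⟨m, ?_⟩ ⟨z, hz⟩
  rintro _ ⟨w, rfl⟩
  exact le_add_of_le_of_nonneg (hm (mem_image_of_mem f w.2)) (mul_nonneg hc dist_nonneg)

theorem infConvolution_le_self (hf : BddBelow (f '' K)) (hc : 0 ≤ c) (hx : x ∈ K) :
    infConvolution K f c x ≤ f x := by
  simpa using infConvolution_le_add_mul_dist hf hc x hx

theorem lipschitzWith_infConvolution (hK : K.Nonempty) (hf : BddBelow (f '' K)) (c : ℝ≥0) :
    LipschitzWith c (infConvolution K f c) := by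
  have : Nonempty K := hK.to_subtype
  refine LipschitzWith.of_le_add_mul c fun x y => ?_
  rw [← sub_le_iff_le_add]
  refine le_ciInf fun z => ?_
  rw [sub_le_iff_le_add]
  calc infConvolution K f c x ≤ f z + c * dist x z :=
        infConvolution_le_add_mul_dist hf c.coe_nonneg x z.2
    _ ≤ f z + c * (dist x y + dist y z) := by gcongr; exact dist_triangle x y z
    _ = f z + c * dist y z + c * dist x y := by ring

theorem sub_le_infConvolution {δ η : ℝ} (hc : 0 ≤ c) (hη : 0 ≤ η) (hx : x ∈ K)
    (hnear : ∀ z ∈ K, dist x z < δ → f x - f z ≤ η) (hfar : ∀ z ∈ K, f x - f z ≤ c * δ) :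
    f x - η ≤ infConvolution K f c x := by
  have : Nonempty K := ⟨⟨x, hx⟩⟩
  refine le_ciInf fun z => ?_
  rcases lt_or_ge (dist x z) δ with hz | hz
  · have hpenalty : 0 ≤ c * dist x z := by positivity
    linarith [hnear z z.2 hz]
  · have hpenalty : c * δ ≤ c * dist x z := by gcongr
    linarith [hfar z z.2]

theorem tendstoUniformlyOn_infConvolution (hf : UniformContinuousOn f K)
    (hbdd : IsBounded (f '' K)) : TendstoUniformlyOn (infConvolution K f) f atTop K := by
  rw [Metric.tendstoUniformlyOn_iff]
  intro η hη
  obtain ⟨δ, hδ, hfδ⟩ := Metric.uniformContinuousOn_iff.1 hf (η / 2) (half_pos hη)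
  obtain ⟨M, hM⟩ := Metric.isBounded_iff.1 hbdd
  filter_upwards [eventually_ge_atTop 0, eventually_ge_atTop (M / δ)] with c hc hcM x hx
  have hupper := infConvolution_le_self hbdd.bddBelow hc hx
  have hlower : f x - η / 2 ≤ infConvolution K f c x := by
    refine sub_le_infConvolution hc (half_pos hη).le hx (δ := δ) (fun z hz hxz => ?_)
      fun z hz => ?_
    · exact (le_abs_self _).trans (hfδ x hx z hz hxz).le
    · calc f x - f z ≤ dist (f x) (f z) := le_abs_self _
        _ ≤ M := hM (mem_image_of_mem f hx) (mem_image_of_mem f hz)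
        _ ≤ c * δ := (div_le_iff₀ hδ).1 hcM
  rw [Real.dist_eq, abs_of_nonneg (sub_nonneg.2 hupper)]
  linarith

end InfConvolution

section Coordinates

theorem isBounded_image_piLp_apply {X ι : Type*} {p : ℝ≥0∞} {β : ι → Type*} [∀ i, Bornology (β i)]
    {f : X → PiLp p β} {s : Set X} (hf : IsBounded (f '' s)) (i : ι) :
    IsBounded ((fun x => f x i) '' s) := by
  simpa only [image_image] using (isBounded_induced.1 hf).image_eval i

theorem lipschitzWith_piLp {X ι : Type*} [Fintype ι] [PseudoEMetricSpace X] {p : ℝ≥0∞}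
    [Fact (1 ≤ p)] {β : ι → Type*} [∀ i, PseudoEMetricSpace (β i)] {F : X → PiLp p β} {C : ℝ≥0}
    (hF : ∀ i, LipschitzWith C fun x => F x i) :
    LipschitzWith ((Fintype.card ι : ℝ≥0) ^ (1 / p).toReal * C) F :=
  (PiLp.lipschitzWith_toLp p β).comp fun x y => edist_pi_le_iff.2 fun i => hF i x y

theorem tendstoUniformlyOn_pi {X ι κ : Type*} {β : ι → Type*} [∀ i, UniformSpace (β i)]
    {F : κ → X → ∀ i, β i} {f : X → ∀ i, β i} {l : Filter κ} {s : Set X} :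
    TendstoUniformlyOn F f l s ↔
      ∀ i, TendstoUniformlyOn (fun k x => F k x i) (fun x => f x i) l s := by
  simp only [tendstoUniformlyOn_iff_tendsto, Pi.uniformity, tendsto_iInf, tendsto_comap_iff,
    Function.comp_def]

theorem tendstoUniformlyOn_piLp {X ι κ : Type*} {p : ℝ≥0∞} {β : ι → Type*}
    [∀ i, UniformSpace (β i)] {F : κ → X → PiLp p β} {f : X → PiLp p β} {l : Filter κ} {s : Set X}
    (h : ∀ i, TendstoUniformlyOn (fun k x => F k x i) (fun x => f x i) l s) :
    TendstoUniformlyOn F f l s :=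
  (PiLp.uniformContinuous_toLp p β).comp_tendstoUniformlyOn (tendstoUniformlyOn_pi.2 h)

end Coordinates

section InfConvolutionMap

variable {X ι : Type*} [PseudoMetricSpace X] {p : ℝ≥0∞} {K : Set X} {f : X → PiLp p fun _ : ι => ℝ}

/-- The infimal convolution of a vector-valued map with `c * dist`, taken coordinate by
coordinate; it is `F^ε` for `f = id` and `c = 1 / ε`. -/
noncomputable def infConvolutionMap (K : Set X) (f : X → PiLp p fun _ : ι => ℝ) (c : ℝ) (x : X) :
    PiLp p fun _ : ι => ℝ :=
  WithLp.toLp p fun i => infConvolution K (fun z => f z i) c x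

theorem lipschitzWith_infConvolutionMap [Fintype ι] [Fact (1 ≤ p)] (hK : K.Nonempty)
    (hf : IsBounded (f '' K)) (c : ℝ≥0) :
    LipschitzWith ((Fintype.card ι : ℝ≥0) ^ (1 / p).toReal * c) (infConvolutionMap K f c) :=
  lipschitzWith_piLp fun i =>
    lipschitzWith_infConvolution hK (isBounded_image_piLp_apply hf i).bddBelow c

theorem tendstoUniformlyOn_infConvolutionMap (hf : UniformContinuousOn f K)
    (hbdd : IsBounded (f '' K)) : TendstoUniformlyOn (infConvolutionMap K f) f atTop K :=
  tendstoUniformlyOn_piLp fun i =>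
    tendstoUniformlyOn_infConvolution
      ((Pi.uniformContinuous_proj _ i).comp_uniformContinuousOn
        ((PiLp.uniformContinuous_ofLp p _).comp_uniformContinuousOn hf))
      (isBounded_image_piLp_apply hbdd i)

end InfConvolutionMap

theorem infConvolution_lipschitz_and_uniform_convergence_general {X ι : Type*}
    [PseudoMetricSpace X] [Fintype ι] {p : ℝ≥0∞} [Fact (1 ≤ p)] {K : Set X} (hK : K.Nonempty)
    {f : X → PiLp p fun _ : ι => ℝ} (hf : UniformContinuousOn f K) (hbdd : IsBounded (f '' K))
    {F : ℝ → X → PiLp p fun _ : ι => ℝ}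
    (hF : ∀ ε x i, F ε x i = ⨅ z : K, (f z i + (1 / ε) * dist x z)) :
    (∀ ε > (0 : ℝ), ∃ C > (0 : ℝ), ∀ x y, ‖F ε x - F ε y‖ ≤ C * dist x y) ∧
    (∀ η > (0 : ℝ), ∃ ε₀ > (0 : ℝ), ∀ ε : ℝ, 0 < ε → ε ≤ ε₀ → ∀ x ∈ K, ‖F ε x - f x‖ ≤ η) := by
  obtain rfl : F = fun ε => infConvolutionMap K f (1 / ε) := by ext ε x i; exact hF ε x i
  refine ⟨fun ε hε => ?_, fun η hη => ?_⟩
  · obtain ⟨C, hC⟩ : ∃ C, LipschitzWith C (infConvolutionMap K f (1 / ε)) :=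
      ⟨_, lipschitzWith_infConvolutionMap hK hbdd ⟨1 / ε, by positivity⟩⟩
    refine ⟨(C + 1 : ℝ≥0), by positivity, fun x y => ?_⟩
    rw [← dist_eq_norm]
    exact (hC.weaken le_self_add).dist_le_mul x y
  · have hclose := Metric.tendstoUniformlyOn_iff.1
      (tendstoUniformlyOn_infConvolutionMap hf hbdd) η hη
    have hscale : Tendsto (fun ε : ℝ => 1 / ε) (𝓝[>] 0) atTop := by
      simpa only [one_div] using tendsto_inv_nhdsGT_zero
    obtain ⟨ε₀, hε₀, hsub⟩ := mem_nhdsGT_iff_exists_Ioc_subset.1 (hscale.eventually hclose)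
    refine ⟨ε₀, hε₀, fun ε hε hε_le x hx => ?_⟩
    rw [← dist_eq_norm, dist_comm]
    exact (hsub ⟨hε, hε_le⟩ x hx).le

/-- Let `ρ` be a metric on `ℝⁿ` inducing the Euclidean topology. Then the closed Euclidean
unit ball `𝔹` is compact in `(ℝⁿ, ρ)`; moreover, for every `ε > 0` the map
`F^ε = (π₁^ε, …, πₙ^ε)`, with `π_i^ε(x) = min_{z ∈ 𝔹} (π_i(z) + (1/ε) ρ(x,z))`, is
Lipschitz from `(𝔹, ρ)` to Euclidean `ℝⁿ`, and `F^ε → id` uniformly on `𝔹` as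
`ε → 0⁺`. -/
theorem infConvolution_lipschitz_and_uniform_convergence (n : ℕ)
    (ρ : MetricSpace (EuclideanSpace ℝ (Fin n)))
    (hρ : ρ.toUniformSpace.toTopologicalSpace =
      (inferInstance : TopologicalSpace (EuclideanSpace ℝ (Fin n))))
    (F : ℝ → EuclideanSpace ℝ (Fin n) → EuclideanSpace ℝ (Fin n))
    (hF : ∀ (ε : ℝ) (x : EuclideanSpace ℝ (Fin n)) (i : Fin n),
      F ε x i = ⨅ z : Metric.closedBall (0 : EuclideanSpace ℝ (Fin n)) 1,
        ((z : EuclideanSpace ℝ (Fin n)) i + (1 / ε) * ρ.dist x z)) :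
    @IsCompact (EuclideanSpace ℝ (Fin n)) ρ.toUniformSpace.toTopologicalSpace
      (Metric.closedBall (0 : EuclideanSpace ℝ (Fin n)) 1) ∧
    (∀ ε > (0 : ℝ), ∃ C > (0 : ℝ),
      ∀ x ∈ Metric.closedBall (0 : EuclideanSpace ℝ (Fin n)) 1,
      ∀ y ∈ Metric.closedBall (0 : EuclideanSpace ℝ (Fin n)) 1,
        ‖F ε x - F ε y‖ ≤ C * ρ.dist x y) ∧
    (∀ η > (0 : ℝ), ∃ ε₀ > (0 : ℝ), ∀ ε : ℝ, 0 < ε → ε ≤ ε₀ →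
      ∀ x ∈ Metric.closedBall (0 : EuclideanSpace ℝ (Fin n)) 1, ‖F ε x - x‖ ≤ η) := by
  have hB : @IsCompact _ ρ.toUniformSpace.toTopologicalSpace (Metric.closedBall 0 1) :=
    hρ ▸ isCompact_closedBall 0 1
  have hid : @UniformContinuousOn _ _ ρ.toUniformSpace _ id (Metric.closedBall 0 1) :=
    @IsCompact.uniformContinuousOn_of_continuous _ _ ρ.toUniformSpace _ _ _ hB
      (hρ ▸ continuousOn_id)
  obtain ⟨hlip, hconv⟩ := @infConvolution_lipschitz_and_uniform_convergence_general _ _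
    ρ.toPseudoMetricSpace _ _ _ _ ⟨0, by simp⟩ _ hid (by simpa using Metric.isBounded_closedBall)
    F hF
  exact ⟨hB, fun ε hε => (hlip ε hε).imp fun C hC => ⟨hC.1, fun x _ y _ => hC.2 x y⟩, hconv⟩
end
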